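/- arXiv:2002.00260 — 2 statements merged into one kernel-verified Lean document; each statement's English description precedes it below -/
import Mathlib

section
/- Let the step size be α_t = h/(t + t0) with t0 ≥ max(4h, τ) and h ≥ 4/(μ_min(1−γ)), where τ = ⌈log₂(2/μ_min)⌉ t_mix. Then for every T ≥ τ and every δ ∈ (0,1), with probability at least 1 − δ, ‖Q(T) − Q*‖_∞ ≤ (60 r̄/(1−γ)²) · √(2(τ+1)h/μ_min) · √(log(2(τ+1) T² |S||A|/δ)/(T + t0)) + (4 r̄/(1−γ)²) · max(160 h τ/μ_min, 2(τ + t0)) · 1/(T + t0). -/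
/-!
With a delay `τ` the exploration condition says that, given the past up to time `n`, every
coordinate is updated at time `τ + n` with probability at least `σ = μ_min / 2`. Freeze the residual
`F x - x` over the delay, at a cost of order `τ * α`, and replace the indicator of an update by its
conditional probability given `ℱ n`. This writes the error `e` as a deterministic contraction,
perturbed by a drift and driven by a noise `ε n` that is centred given `ℱ n` and measurable with
respect to `ℱ (n + τ + 1)`. Let `M` be that noise accumulated with the deterministic weights
`1 - α * σ`. It is a weighted sum of the `ε k`, whose restrictions to the residue classes modulo
`τ + 1` are martingale difference sequences, so it is sub-Gaussian with variance proxy of order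
`(τ + 1) / n`. The difference `e - M` satisfies a recursion without noise, and a bound
`a / √n + b / n` propagates along it: half of the contraction absorbs `M` and the drift, the other
half pays for the decrease of the bound. Q-learning is the case where `F` is the Bellman operator
and the noise is the temporal-difference noise.
-/

open MeasureTheory Finset

section

open ProbabilityTheory
open scoped NNReal

/-! ### Sub-Gaussian sums of delayed martingale differences -/

section SubGaussian

variable {Ω : Type*} {m m0 : MeasurableSpace Ω} {μ : Measure Ω}

theorem exp_mul_le_cosh_add_mul_sinh_div {x b : ℝ} (hx : |x| ≤ b) (t : ℝ) :
    Real.exp (t * x) ≤ Real.cosh (t * b) + Real.sinh (t * b) / b * x := by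
  rcases ((abs_nonneg x).trans hx).eq_or_lt with rfl | hb
  · simp [abs_nonpos_iff.mp hx]
  · have hxb : |x / b| ≤ 1 := by rwa [abs_div, abs_of_pos hb, div_le_one hb]
    calc Real.exp (t * x) = Real.exp (x / b * (t * b)) := by congr 1; field_simp
      _ ≤ Real.cosh (t * b) + x / b * Real.sinh (t * b) :=
          Real.exp_mul_le_cosh_add_mul_sinh hxb _
      _ = _ := by ring

theorem hasSubgaussianMGF_mono {X : Ω → ℝ} {c c' : ℝ≥0} (hX : HasSubgaussianMGF X c μ)
    (hc : c ≤ c') : HasSubgaussianMGF X c' μ where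
  integrable_exp_mul := hX.integrable_exp_mul
  mgf_le t := (hX.mgf_le t).trans (by gcongr)

theorem condExp_mul_eq_zero {X Y : Ω → ℝ} (hX : StronglyMeasurable[m] X)
    (hXY : Integrable (fun ω ↦ X ω * Y ω) μ) (hYi : Integrable Y μ) (hY : μ[Y | m] =ᵐ[μ] 0) :
    μ[fun ω ↦ X ω * Y ω | m] =ᵐ[μ] 0 := by
  filter_upwards [condExp_mul_of_stronglyMeasurable_left hX hXY hYi, hY] with ω hXYω hYω
  rw [show (fun ω ↦ X ω * Y ω) = X * Y from rfl, hXYω]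
  simp [hYω]

theorem condExp_sub_condExp_eq_zero (hm : m ≤ m0) [SigmaFinite (μ.trim hm)] {Y : Ω → ℝ}
    (hY : Integrable Y μ) : μ[Y - μ[Y | m] | m] =ᵐ[μ] 0 := by
  filter_upwards [condExp_sub hY integrable_condExp m] with ω hω
  rw [hω, Pi.sub_apply, condExp_of_stronglyMeasurable hm stronglyMeasurable_condExp
    integrable_condExp, sub_self, Pi.zero_apply]

theorem condExp_eq_zero_of_le {m' : MeasurableSpace Ω} (hmm' : m ≤ m') (hm' : m' ≤ m0)
    [SigmaFinite (μ.trim hm')] {Y : Ω → ℝ} (hY : μ[Y | m'] =ᵐ[μ] 0) : μ[Y | m] =ᵐ[μ] 0 := by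
  refine (condExp_condExp_of_le hmm' hm').symm.trans ((condExp_congr_ae hY).trans ?_)
  rw [condExp_zero]

theorem measureReal_abs_ge_le_two_mul_exp {Y : Ω → ℝ} {c : ℝ≥0} (hY : HasSubgaussianMGF Y c μ)
    {y : ℝ} (hy : 0 ≤ y) :
    μ.real {ω | y ≤ |Y ω|} ≤ 2 * Real.exp (-y ^ 2 / (2 * c)) := by
  calc μ.real {ω | y ≤ |Y ω|} = μ.real ({ω | y ≤ Y ω} ∪ {ω | y ≤ (-Y) ω}) := by
        simp only [le_abs, Set.ofPred_or, Pi.neg_apply]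
    _ ≤ μ.real {ω | y ≤ Y ω} + μ.real {ω | y ≤ (-Y) ω} := measureReal_union_le _ _
    _ ≤ Real.exp (-y ^ 2 / (2 * c)) + Real.exp (-y ^ 2 / (2 * c)) :=
        add_le_add (hY.measure_ge_le hy) (hY.neg.measure_ge_le hy)
    _ = _ := by ring

variable [IsProbabilityMeasure μ]

theorem ofReal_one_sub_le_measure_of_not {p : Ω → Prop} {δ : ℝ} (hp : μ.real {ω | ¬p ω} ≤ δ) :
    ENNReal.ofReal (1 - δ) ≤ μ {ω | p ω} := by
  rw [ENNReal.ofReal_le_iff_le_toReal (measure_ne_top _ _), sub_le_iff_le_add, ← measureReal_def]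
  calc 1 = μ.real ({ω | p ω} ∪ {ω | ¬p ω}) := by
        rw [← Set.compl_ofPred, Set.union_compl_self, probReal_univ]
    _ ≤ μ.real {ω | p ω} + δ := by grw [measureReal_union_le, hp]

theorem hasSubgaussianMGF_add_of_condExp_eq_zero (hm : m ≤ m0) {X Y : Ω → ℝ} {b c : ℝ≥0}
    (hX : StronglyMeasurable[m] X) (hXc : HasSubgaussianMGF X c μ)
    (hYm : AEStronglyMeasurable Y μ) (hYb : ∀ᵐ ω ∂μ, |Y ω| ≤ b) (hY : μ[Y | m] =ᵐ[μ] 0) :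
    HasSubgaussianMGF (fun ω ↦ X ω + Y ω) (c + b ^ 2) μ where
  integrable_exp_mul t := by
    have hbdd : ∀ᵐ ω ∂μ, ‖Real.exp (t * Y ω)‖ ≤ Real.exp (|t| * b) := by
      filter_upwards [hYb] with ω hω
      rw [Real.norm_eq_abs, Real.abs_exp, Real.exp_le_exp]
      exact (le_abs_self _).trans (by rw [abs_mul]; gcongr)
    simpa only [mul_add, Real.exp_add] using
      (hXc.integrable_exp_mul t).mul_bdd (by fun_prop) hbdd
  mgf_le t := by
    set E : Ω → ℝ := fun ω ↦ Real.exp (t * X ω)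
    have hE : Integrable E μ := hXc.integrable_exp_mul t
    have hEY : Integrable (fun ω ↦ E ω * Y ω) μ := hE.mul_bdd hYm hYb
    have horth : ∫ ω, E ω * Y ω ∂μ = 0 := by
      rw [← integral_condExp hm]
      exact integral_eq_zero_of_ae <| condExp_mul_eq_zero
        (Real.continuous_exp.comp_stronglyMeasurable (hX.const_mul t)) hEY (.of_bound hYm b hYb) hY
    calc mgf (fun ω ↦ X ω + Y ω) μ t
        ≤ ∫ ω, Real.cosh (t * b) * E ω + Real.sinh (t * b) / b * (E ω * Y ω) ∂μ := by
          refine integral_mono_of_nonneg (.of_forall fun ω ↦ (Real.exp_pos _).le)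
            ((hE.const_mul _).add (hEY.const_mul _)) ?_
          filter_upwards [hYb] with ω hω
          calc Real.exp (t * (X ω + Y ω)) = E ω * Real.exp (t * Y ω) := by
                rw [mul_add, Real.exp_add]
            _ ≤ E ω * (Real.cosh (t * b) + Real.sinh (t * b) / b * Y ω) := by
                gcongr
                exact exp_mul_le_cosh_add_mul_sinh_div hω t
            _ = _ := by ring
      _ = Real.cosh (t * b) * mgf X μ t := by
          rw [integral_add (hE.const_mul _) (hEY.const_mul _), integral_const_mul,
            integral_const_mul, horth, mul_zero, add_zero]
          rfl
      _ ≤ Real.exp ((t * b) ^ 2 / 2) * Real.exp (c * t ^ 2 / 2) :=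
          mul_le_mul (Real.cosh_le_exp_half_sq _) (hXc.mgf_le t) mgf_nonneg (Real.exp_pos _).le
      _ = Real.exp (↑(c + b ^ 2) * t ^ 2 / 2) := by
          rw [← Real.exp_add]
          push_cast
          ring_nf

variable {ℱ : Filtration ℕ m0} {D : ℕ} {X : ℕ → Ω → ℝ} {b : ℕ → ℝ≥0}

theorem hasSubgaussianMGF_sum_of_delay_le (hXm : ∀ k, StronglyMeasurable[ℱ (k + D)] (X k))
    (hXb : ∀ k, ∀ᵐ ω ∂μ, |X k ω| ≤ b k) (hX : ∀ k, μ[X k | ℱ k] =ᵐ[μ] 0) (I : Finset ℕ)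
    (hI : ∀ k ∈ I, ∀ l ∈ I, k < l → k + D ≤ l) :
    HasSubgaussianMGF (fun ω ↦ ∑ k ∈ I, X k ω) (∑ k ∈ I, b k ^ 2) μ := by
  induction I using Finset.induction_on_max with
  | empty => simp
  | insert l I hl ih =>
    have hlI : l ∉ I := fun h ↦ (hl l h).false
    have hpast : StronglyMeasurable[ℱ l] fun ω ↦ ∑ k ∈ I, X k ω :=
      Finset.stronglyMeasurable_fun_sum I fun k hk ↦
        (hXm k).mono (ℱ.mono (hI k (mem_insert_of_mem hk) l (mem_insert_self l I) (hl k hk)))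
    have hsum := hasSubgaussianMGF_add_of_condExp_eq_zero (ℱ.le l) hpast
      (ih fun k hk j hj ↦ hI k (mem_insert_of_mem hk) j (mem_insert_of_mem hj))
      ((hXm l).mono (ℱ.le _)).aestronglyMeasurable (hXb l) (hX l)
    simpa only [sum_insert hlI, add_comm] using hsum

theorem hasSubgaussianMGF_sum_card_mul {ι : Type*} (s : Finset ι) {Y : ι → Ω → ℝ} {c : ι → ℝ≥0}
    (hY : ∀ i ∈ s, HasSubgaussianMGF (Y i) (c i) μ) :
    HasSubgaussianMGF (fun ω ↦ ∑ i ∈ s, Y i ω) (#s * ∑ i ∈ s, c i) μ := by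
  have hsqrt : HasSubgaussianMGF (fun ω ↦ ∑ i ∈ s, Y i ω) ((∑ i ∈ s, (c i).sqrt) ^ 2) μ := by
    induction s using Finset.cons_induction with
    | empty => simp
    | cons i s hi ih =>
      simpa only [sum_cons, NNReal.sqrt_sq] using
        (hY i (mem_cons_self i s)).add (ih fun j hj ↦ hY j (mem_cons_of_mem hj))
  refine hasSubgaussianMGF_mono hsqrt ?_
  simpa only [NNReal.sq_sqrt] using
    sq_sum_le_card_mul_sum_sq (s := s) (f := fun i ↦ (c i).sqrt)

/-- Terms whose indices agree modulo `D` are `D` steps apart. -/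
theorem hasSubgaussianMGF_sum_range_of_delay (hD : 0 < D)
    (hXm : ∀ k, StronglyMeasurable[ℱ (k + D)] (X k))
    (hXb : ∀ k, ∀ᵐ ω ∂μ, |X k ω| ≤ b k) (hX : ∀ k, μ[X k | ℱ k] =ᵐ[μ] 0) (n : ℕ) :
    HasSubgaussianMGF (fun ω ↦ ∑ k ∈ range n, X k ω) (D * ∑ k ∈ range n, b k ^ 2) μ := by
  have hmod : ∀ k ∈ range n, k % D ∈ range D := fun k _ ↦ mem_range.mpr (Nat.mod_lt k hD)
  have hclass (j : ℕ) : HasSubgaussianMGF (fun ω ↦ ∑ k ∈ range n with k % D = j, X k ω)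
      (∑ k ∈ range n with k % D = j, b k ^ 2) μ := by
    refine hasSubgaussianMGF_sum_of_delay_le hXm hXb hX _ fun k hk l hl hkl ↦ ?_
    have hdvd : D ∣ l - k := (Nat.modEq_iff_dvd' hkl.le).mp
      ((mem_filter.mp hk).2.trans (mem_filter.mp hl).2.symm)
    have := Nat.le_of_dvd (Nat.sub_pos_of_lt hkl) hdvd
    omega
  simpa only [sum_fiberwise_of_maps_to hmod, card_range] using
    hasSubgaussianMGF_sum_card_mul (range D) fun j _ ↦ hclass j

end SubGaussian

/-! ### Discounted sums -/

/-- The solution of the linear recursion `M (n + 1) = ρ n * M n + x n` with `M 0 = 0`. -/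
def discountedSum (ρ x : ℕ → ℝ) : ℕ → ℝ
  | 0 => 0
  | n + 1 => ρ n * discountedSum ρ x n + x n

theorem discountedSum_eq_sum (ρ x : ℕ → ℝ) (n : ℕ) :
    discountedSum ρ x n = ∑ k ∈ range n, (∏ i ∈ Ico (k + 1) n, ρ i) * x k := by
  induction n with
  | zero => rfl
  | succ n ih =>
    rw [discountedSum, ih, sum_range_succ, Ico_self, prod_empty, one_mul, mul_sum]
    congr 1
    refine sum_congr rfl fun k hk ↦ ?_
    rw [prod_Ico_succ_top (mem_range.mp hk)]
    ring

theorem hasSubgaussianMGF_discountedSum {Ω : Type*} {m0 : MeasurableSpace Ω} {μ : Measure Ω}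
    [IsProbabilityMeasure μ] {ℱ : Filtration ℕ m0} {D : ℕ} (hD : 0 < D) {ε : ℕ → Ω → ℝ}
    (hεm : ∀ k, StronglyMeasurable[ℱ (k + D)] (ε k)) {b : ℝ≥0}
    (hεb : ∀ k, ∀ᵐ ω ∂μ, |ε k ω| ≤ b) (hε : ∀ k, μ[ε k | ℱ k] =ᵐ[μ] 0)
    (ρ c : ℕ → ℝ) (n : ℕ) {V : ℝ≥0}
    (hV : D * (discountedSum (fun k ↦ ρ k ^ 2) (fun k ↦ c k ^ 2) n * b ^ 2) ≤ V) :
    HasSubgaussianMGF (fun ω ↦ discountedSum ρ (fun k ↦ c k * ε k ω) n) V μ := by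
  set w : ℕ → ℝ := fun k ↦ (∏ i ∈ Ico (k + 1) n, ρ i) * c k
  have hsum := hasSubgaussianMGF_sum_range_of_delay (ℱ := ℱ) (X := fun k ω ↦ w k * ε k ω)
    (b := fun k ↦ Real.nnabs (w k) * b) hD (fun k ↦ (hεm k).const_mul (w k))
    (fun k ↦ by
      filter_upwards [hεb k] with ω hω
      rw [abs_mul, NNReal.coe_mul, Real.coe_nnabs]
      gcongr)
    (fun k ↦ by
      filter_upwards [condExp_smul (w k) (ε k) (ℱ k), hε k] with ω hsmul hω
      rw [show (fun ω ↦ w k * ε k ω) = w k • ε k from rfl, hsmul]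
      simp [hω]) n
  simp only [discountedSum_eq_sum] at hV ⊢
  simp only [← mul_assoc]
  refine hasSubgaussianMGF_mono hsum ?_
  rw [← NNReal.coe_le_coe]
  convert hV using 1
  push_cast
  simp only [sum_mul, mul_pow, sq_abs, w, prod_pow]

theorem discountedSum_sq_le {σ h s₀ : ℝ} (hσ : 0 < σ) (hσ1 : σ ≤ 1) (hσh : 2 ≤ σ * h)
    (hs₀ : 4 * h ≤ s₀) (n : ℕ) :
    discountedSum (fun k ↦ (1 - h / (s₀ + k) * σ) ^ 2) (fun k ↦ (h / (s₀ + k)) ^ 2) n ≤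
      h / σ / (s₀ + n) := by
  have hh : 0 < h := by
    by_contra! hh
    nlinarith
  induction n with
  | zero =>
    have : 0 ≤ s₀ := by linarith
    simp only [discountedSum, CharP.cast_eq_zero, add_zero]
    positivity
  | succ n ih =>
    obtain ⟨s, hs⟩ : ∃ s, s = s₀ + n := ⟨_, rfl⟩
    obtain ⟨k, hk⟩ : ∃ k, k = σ * h := ⟨_, rfl⟩
    have hks : 4 * k ≤ s := by
      have := n.cast_nonneg (α := ℝ)
      nlinarith
    have hs_pos : 0 < s := by linarith
    have hcubic : (s ^ 2 - k * s + k ^ 2) * (s + 1) ≤ s ^ 3 := by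
      have hquad : 0 ≤ (s - 4 * k) * (s * (k - 1)) :=
        mul_nonneg (by linarith) (mul_nonneg hs_pos.le (by linarith))
      have hlin : 0 ≤ (s - 4 * k) * (k * (k - 1)) :=
        mul_nonneg (by linarith) (mul_nonneg (by linarith) (by linarith))
      nlinarith [mul_nonneg (sq_nonneg k) (by linarith : 0 ≤ k - 2)]
    rw [discountedSum, ← hs]
    push_cast
    rw [← add_assoc, ← hs]
    rw [← hs] at ih
    calc (1 - h / s * σ) ^ 2 * discountedSum _ _ n + (h / s) ^ 2
        ≤ (1 - h / s * σ) ^ 2 * (h / σ / s) + (h / s) ^ 2 := by gcongr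
      _ = h / σ * ((s ^ 2 - k * s + k ^ 2) / s ^ 3) := by
          rw [hk]
          field_simp
          ring
      _ ≤ h / σ * (1 / (s + 1)) := by
          refine mul_le_mul_of_nonneg_left ?_ (by positivity)
          rwa [div_le_div_iff₀ (by positivity) (by positivity), one_mul]
      _ = h / σ / (s + 1) := by ring

/-! ### The error recursion -/

/-- The shape `a / √s + b / s` of the error bound at time `s`: a stochastic part and an initial
transient. -/
noncomputable def errorBound (a b s : ℝ) : ℝ := a / √s + b / s

theorem errorBound_nonneg {a b s : ℝ} (ha : 0 ≤ a) (hb : 0 ≤ b) (hs : 0 ≤ s) :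
    0 ≤ errorBound a b s := by
  unfold errorBound
  positivity

theorem le_errorBound_mul {a b c s : ℝ} (ha : 0 ≤ a) (hs : 0 < s) (h : b * s ≤ b * c) :
    b ≤ errorBound a (b * c) s := by
  unfold errorBound
  calc b ≤ 0 + b * c / s := by rwa [zero_add, le_div_iff₀ hs]
    _ ≤ a / √s + b * c / s := by
      gcongr
      positivity

theorem one_sub_inv_mul_errorBound_le {a b s : ℝ} (ha : 0 ≤ a) (hb : 0 ≤ b) (hs : 1 ≤ s) :
    (1 - 1 / s) * errorBound a b s ≤ errorBound a b (s + 1) := by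
  have hs_pos : 0 < s := by linarith
  have hsqrt : (1 - 1 / s) / √s ≤ 1 / √(s + 1) := by
    rw [div_le_div_iff₀ (by positivity) (by positivity), one_mul]
    refine Real.le_sqrt_of_sq_le ?_
    rw [mul_pow, Real.sq_sqrt (by linarith)]
    field_simp
    nlinarith
  have hinv : (1 - 1 / s) / s ≤ 1 / (s + 1) := by
    rw [div_le_div_iff₀ (by positivity) (by positivity)]
    field_simp
    nlinarith
  calc (1 - 1 / s) * errorBound a b s = a * ((1 - 1 / s) / √s) + b * ((1 - 1 / s) / s) := by
        unfold errorBound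
        ring
    _ ≤ a * (1 / √(s + 1)) + b * (1 / (s + 1)) :=
        add_le_add (mul_le_mul_of_nonneg_left hsqrt ha) (mul_le_mul_of_nonneg_left hinv hb)
    _ = errorBound a b (s + 1) := by
        unfold errorBound
        ring

/-- Half of the contraction `a * d * (1 - γ)` absorbs the noise `M` and the perturbation `φ`; the
other half pays for the decrease of the bound. -/
theorem abs_error_step_sub_noise_le {γ σ a d s e g M ε φ m u v : ℝ} (hγ : γ < 1) (ha : 0 ≤ a)
    (ha1 : a ≤ 1) (hσ : 0 ≤ σ) (hσd : σ ≤ d) (hd : d ≤ 1) (hu : 0 ≤ u) (hv : 0 ≤ v)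
    (hg : |g| ≤ γ * (u + v + m)) (hM : |M| ≤ m) (heM : |e - M| ≤ u + v)
    (hφ : |φ| ≤ σ * (1 - γ) * v / 2) (hm : 2 * m ≤ (1 - γ) * u / 2)
    (hs : 1 / s ≤ a * σ * (1 - γ) / 2) :
    |e + a * (d * (g - e) + ε + φ) - ((1 - a * σ) * M + a * ε)| ≤ (1 - 1 / s) * (u + v) := by
  have hm0 : 0 ≤ m := (abs_nonneg M).trans hM
  have had : a * d ≤ 1 := mul_le_one₀ ha1 (hσ.trans hσd) hd
  have had0 : 0 ≤ a * d := mul_nonneg ha (hσ.trans hσd)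
  have hadσ : 0 ≤ a * (d - σ) := mul_nonneg ha (by linarith)
  calc |e + a * (d * (g - e) + ε + φ) - ((1 - a * σ) * M + a * ε)|
      = |(1 - a * d) * (e - M) + a * d * g - a * (d - σ) * M + a * φ| := by
        congr 1
        ring
    _ ≤ (1 - a * d) * |e - M| + a * d * |g| + a * (d - σ) * |M| + a * |φ| := by
        refine (abs_add_le _ _).trans (add_le_add ((abs_sub _ _).trans
          (add_le_add ((abs_add_le _ _).trans (add_le_add ?_ ?_)) ?_)) ?_) <;>
        rw [abs_mul, abs_of_nonneg (by linarith)]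
    _ ≤ (1 - a * d) * (u + v) + a * d * (γ * (u + v + m)) + a * (d - σ) * m +
          a * (σ * (1 - γ) * v / 2) := by gcongr
    _ ≤ (u + v) - a * d * ((1 - γ) * (u + v)) + a * d * (2 * m) + a * (σ * (1 - γ) * v / 2) := by
        nlinarith [mul_nonneg had0 (mul_nonneg (by linarith : 0 ≤ 1 - γ) hm0),
          mul_nonneg (mul_nonneg ha hσ) hm0]
    _ ≤ (u + v) - a * d * ((1 - γ) * (u + v)) + a * d * ((1 - γ) * u / 2) +
          a * (d * (1 - γ) * v / 2) := by gcongr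
    _ = (u + v) - a * d * (1 - γ) / 2 * (u + v) := by ring
    _ ≤ (u + v) - a * σ * (1 - γ) / 2 * (u + v) := by gcongr
    _ ≤ (1 - 1 / s) * (u + v) := by
        rw [sub_mul, one_mul]
        gcongr

theorem norm_error_step_sub_noise_le {ι : Type*} [Fintype ι] {γ σ h s c C : ℝ}
    {e e' M M' g d ε φ : ι → ℝ} (hγ0 : 0 ≤ γ) (hγ : γ < 1) (hσ : 0 ≤ σ) (hh0 : 0 ≤ h)
    (hh : 2 ≤ σ * h * (1 - γ)) (hs : 1 ≤ s) (hhs : h ≤ s) (hc : 0 ≤ c) (hC : 0 ≤ C)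
    (he' : ∀ i, e' i = e i + h / s * (d i * (g i - e i) + ε i + φ i))
    (hM' : ∀ i, M' i = (1 - h / s * σ) * M i + h / s * ε i)
    (hg : ∀ i, |g i| ≤ γ * ‖e‖) (hd : ∀ i, d i ∈ Set.Icc σ 1)
    (hφ : ∀ i, |φ i| ≤ σ * (1 - γ) * (C / s) / 2) (hM : ‖M‖ ≤ c / √s)
    (heM : ‖e - M‖ ≤ errorBound (4 * c / (1 - γ)) C s) :
    ‖e' - M'‖ ≤ errorBound (4 * c / (1 - γ)) C (s + 1) := by
  have hγ' : 0 < 1 - γ := sub_pos.mpr hγ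
  have hs_pos : 0 < s := zero_lt_one.trans_le hs
  have hnorm : ‖e‖ ≤ errorBound (4 * c / (1 - γ)) C s + c / √s :=
    (norm_le_norm_sub_add e M).trans (add_le_add heM hM)
  refine (pi_norm_le_iff_of_nonneg
    (errorBound_nonneg (by positivity) hC (by linarith))).mpr fun i ↦ ?_
  calc |e' i - M' i| ≤ (1 - 1 / s) * errorBound (4 * c / (1 - γ)) C s := by
        rw [he', hM']
        refine abs_error_step_sub_noise_le hγ (m := c / √s) (by positivity)
          (div_le_one_of_le₀ hhs hs_pos.le) hσ (hd i).1 (hd i).2 (by positivity) (by positivity)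
          ((hg i).trans (by gcongr; exact hnorm)) ((norm_le_pi_norm M i).trans hM)
          ((norm_le_pi_norm (e - M) i).trans heM) (hφ i) (le_of_eq (by field_simp; ring)) ?_
        rw [div_mul_eq_mul_div, div_mul_eq_mul_div, div_div,
          div_le_div_iff₀ hs_pos (by positivity)]
        nlinarith
    _ ≤ errorBound (4 * c / (1 - γ)) C (s + 1) :=
        one_sub_inv_mul_errorBound_le (by positivity) hC hs

theorem norm_error_le_of_recursion {ι : Type*} [Fintype ι] {γ σ h s₀ c C : ℝ} {N : ℕ}
    {e g d ε φ : ℕ → ι → ℝ} (hγ0 : 0 ≤ γ) (hγ : γ < 1) (hσ : 0 ≤ σ) (hh0 : 0 ≤ h)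
    (hh : 2 ≤ σ * h * (1 - γ)) (hs₀ : 1 ≤ s₀) (hhs₀ : h ≤ s₀) (hc : 0 ≤ c) (hC : 0 ≤ C)
    (he₀ : ‖e 0‖ ≤ C / s₀)
    (he : ∀ n < N, ∀ i,
      e (n + 1) i = e n i + h / (s₀ + n) * (d n i * (g n i - e n i) + ε n i + φ n i))
    (hg : ∀ n < N, ∀ i, |g n i| ≤ γ * ‖e n‖)
    (hd : ∀ n < N, ∀ i, d n i ∈ Set.Icc σ 1)
    (hφ : ∀ n < N, ∀ i, |φ n i| ≤ σ * (1 - γ) * (C / (s₀ + n)) / 2)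
    (hM : ∀ n ≤ N, ‖fun i ↦ discountedSum (fun k ↦ 1 - h / (s₀ + k) * σ)
      (fun k ↦ h / (s₀ + k) * ε k i) n‖ ≤ c / √(s₀ + n)) :
    ‖e N‖ ≤ errorBound (5 * c / (1 - γ)) C (s₀ + N) := by
  have hγ' : 0 < 1 - γ := sub_pos.mpr hγ
  set M : ℕ → ι → ℝ := fun n i ↦
    discountedSum (fun k ↦ 1 - h / (s₀ + k) * σ) (fun k ↦ h / (s₀ + k) * ε k i) n
  have hsub : ∀ n ≤ N, ‖e n - M n‖ ≤ errorBound (4 * c / (1 - γ)) C (s₀ + n) := by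
    intro n hn
    induction n with
    | zero =>
      have hM₀ : M 0 = 0 := rfl
      have : 0 ≤ 4 * c / (1 - γ) / √s₀ := by positivity
      rw [hM₀, sub_zero, errorBound, CharP.cast_eq_zero, add_zero]
      linarith
    | succ n ih =>
      have := n.cast_nonneg (α := ℝ)
      rw [Nat.cast_succ, ← add_assoc]
      exact norm_error_step_sub_noise_le hγ0 hγ hσ hh0 hh (by linarith) (by linarith) hc hC
        (he n hn) (fun _ ↦ rfl) (hg n hn) (hd n hn) (hφ n hn) (hM n (by omega)) (ih (by omega))
  calc ‖e N‖ ≤ errorBound (4 * c / (1 - γ)) C (s₀ + N) + c / √(s₀ + N) :=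
        (norm_le_norm_sub_add (e N) (M N)).trans (add_le_add (hsub N le_rfl) (hM N le_rfl))
    _ ≤ errorBound (4 * c / (1 - γ)) C (s₀ + N) + c / (1 - γ) / √(s₀ + N) := by
        gcongr
        exact le_div_self hc hγ' (by linarith)
    _ = errorBound (5 * c / (1 - γ)) C (s₀ + N) := by
        unfold errorBound
        ring

/-! ### Asynchronous stochastic approximation -/

section ResidualOfContraction

variable {E : Type*} [NormedAddCommGroup E] {F : E → E} {γ : ℝ≥0}

theorem norm_residual_sub_residual_le (hF : ContractingWith γ F) (y z : E) :
    ‖(F y - y) - (F z - z)‖ ≤ 2 * ‖y - z‖ := by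
  calc ‖(F y - y) - (F z - z)‖ = ‖(F y - F z) - (y - z)‖ := by congr 1; abel
    _ ≤ ‖F y - F z‖ + ‖y - z‖ := norm_sub_le _ _
    _ ≤ 1 * ‖y - z‖ + ‖y - z‖ := by
        grw [hF.toLipschitzWith.norm_sub_le, show (γ : ℝ) ≤ 1 from hF.1.le]
    _ = 2 * ‖y - z‖ := by ring

theorem norm_residual_le (hF : ContractingWith γ F) {xstar : E}
    (hfix : Function.IsFixedPt F xstar) (y : E) : ‖F y - y‖ ≤ 2 * ‖y - xstar‖ := by
  simpa [hfix.eq] using norm_residual_sub_residual_le hF y xstar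

theorem abs_residual_apply_le {ι : Type*} [Fintype ι] {F : (ι → ℝ) → ι → ℝ}
    (hF : ContractingWith γ F) {xstar y : ι → ℝ} (hfix : Function.IsFixedPt F xstar) {B : ℝ}
    (hy : ‖y - xstar‖ ≤ B) (j : ι) : |F y j - y j| ≤ 2 * B :=
  (norm_le_pi_norm (F y - y) j).trans ((norm_residual_le hF hfix y).trans (by gcongr))

end ResidualOfContraction

variable {Ω ι : Type*} {m0 : MeasurableSpace Ω}

/-- Asynchronous stochastic approximation of a fixed point of `F`: at time `t` only the coordinate
`i t` of the iterate `x t` moves, with step size `α t`, towards `F (x t)` perturbed by a noise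
`w t` that is centred given the past. -/
structure IsAsyncSA [DecidableEq ι] (μ : Measure Ω) (ℱ : Filtration ℕ m0)
    (F : (ι → ℝ) → ι → ℝ) (α : ℕ → ℝ) (i : ℕ → Ω → ι) (w : ℕ → Ω → ℝ) (x : ℕ → Ω → ι → ℝ) :
    Prop where
  measurable_iterate : ∀ t, Measurable[ℱ t] (x t)
  measurableSet_coord_eq : ∀ t j, MeasurableSet[ℱ t] {ω | i t ω = j}
  measurable_noise : ∀ t, Measurable[ℱ (t + 1)] (w t)
  condExp_noise : ∀ t, μ[w t | ℱ t] =ᵐ[μ] 0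
  update : ∀ t ω j, x (t + 1) ω j =
    if j = i t ω then x t ω j + α t * (F (x t ω) j - x t ω j + w t ω) else x t ω j

/-- The indicator of the event that coordinate `j` is updated at time `t`. -/
def visit [DecidableEq ι] (i : ℕ → Ω → ι) (j : ι) (t : ℕ) (ω : Ω) : ℝ := if i t ω = j then 1 else 0

/-- The conditional probability, given `ℱ n`, that `j` is updated at time `τ + n`. -/
noncomputable def visitProb [DecidableEq ι] (μ : Measure Ω) (ℱ : Filtration ℕ m0) (τ : ℕ)
    (i : ℕ → Ω → ι) (j : ι) (n : ℕ) : Ω → ℝ :=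
  μ[visit i j (τ + n) | ℱ n]

/-- The noise in coordinate `j` of the update at time `τ + n`, with the residual `F x - x` frozen
at time `n` so that it is centred given `ℱ n`. -/
noncomputable def delayedNoise [DecidableEq ι] (μ : Measure Ω) (ℱ : Filtration ℕ m0)
    (F : (ι → ℝ) → ι → ℝ) (τ : ℕ) (i : ℕ → Ω → ι) (w : ℕ → Ω → ℝ) (x : ℕ → Ω → ι → ℝ) (j : ι)
    (n : ℕ) (ω : Ω) : ℝ :=
  (visit i j (τ + n) ω - visitProb μ ℱ τ i j n ω) * (F (x n ω) j - x n ω j) +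
    visit i j (τ + n) ω * w (τ + n) ω

variable [DecidableEq ι] {μ : Measure Ω} {ℱ : Filtration ℕ m0} {F : (ι → ℝ) → ι → ℝ}
  {α : ℕ → ℝ} {i : ℕ → Ω → ι} {w : ℕ → Ω → ℝ} {x : ℕ → Ω → ι → ℝ}

theorem visit_mem_Icc (i : ℕ → Ω → ι) (j : ι) (t : ℕ) (ω : Ω) : visit i j t ω ∈ Set.Icc 0 1 := by
  unfold visit
  split_ifs <;> simp

namespace IsAsyncSA

theorem iterate_succ_apply (hx : IsAsyncSA μ ℱ F α i w x) (t : ℕ) (ω : Ω) (j : ι) :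
    x (t + 1) ω j =
      x t ω j + α t * (visit i j t ω * (F (x t ω) j - x t ω j) + visit i j t ω * w t ω) := by
  rw [hx.update, visit]
  split_ifs <;> grind

theorem measurable_visit (hx : IsAsyncSA μ ℱ F α i w x) (j : ι) (t : ℕ) :
    Measurable[ℱ t] (visit i j t) :=
  Measurable.ite (hx.measurableSet_coord_eq t j) measurable_const measurable_const

theorem measurable_residual (hx : IsAsyncSA μ ℱ F α i w x) (hF : Measurable F) (j : ι)
    (t : ℕ) : Measurable[ℱ t] fun ω ↦ F (x t ω) j - x t ω j :=
  ((measurable_pi_apply j).comp (hF.comp (hx.measurable_iterate t))).sub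
    ((measurable_pi_apply j).comp (hx.measurable_iterate t))

theorem stronglyMeasurable_delayedNoise (hx : IsAsyncSA μ ℱ F α i w x) (hF : Measurable F) (τ : ℕ)
    (j : ι) (n : ℕ) :
    StronglyMeasurable[ℱ (n + (τ + 1))] (delayedNoise μ ℱ F τ i w x j n) := by
  have hn : ℱ n ≤ ℱ (n + (τ + 1)) := ℱ.mono (by omega)
  have hτn : ℱ (τ + n) ≤ ℱ (n + (τ + 1)) := ℱ.mono (by omega)
  have hw : Measurable[ℱ (n + (τ + 1))] (w (τ + n)) := by
    convert hx.measurable_noise (τ + n) using 2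
    omega
  have hv := (hx.measurable_visit j (τ + n)).mono hτn le_rfl
  have hd : Measurable[ℱ (n + (τ + 1))] (visitProb μ ℱ τ i j n) :=
    stronglyMeasurable_condExp.measurable.mono hn le_rfl
  have hres := (hx.measurable_residual hF j n).mono hn le_rfl
  exact (((hv.sub hd).mul hres).add (hv.mul hw)).stronglyMeasurable

section Path

variable [Fintype ι] {γ B : ℝ≥0} {xstar : ι → ℝ}

theorem norm_iterate_succ_sub_le (hx : IsAsyncSA μ ℱ F α i w x) (hF : ContractingWith γ F)
    (hfix : Function.IsFixedPt F xstar) {t : ℕ} (hα : 0 ≤ α t) {ω : Ω}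
    (hxω : ‖x t ω - xstar‖ ≤ B) (hwω : |w t ω| ≤ B) :
    ‖x (t + 1) ω - x t ω‖ ≤ α t * (3 * B) := by
  refine (pi_norm_le_iff_of_nonneg (by positivity)).mpr fun j ↦ ?_
  obtain ⟨hv0, hv1⟩ := visit_mem_Icc i j t ω
  have hres := abs_residual_apply_le hF hfix hxω j
  calc |x (t + 1) ω j - x t ω j|
      = α t * (visit i j t ω * |F (x t ω) j - x t ω j + w t ω|) := by
        rw [hx.iterate_succ_apply, add_sub_cancel_left, ← mul_add, abs_mul, abs_mul,
          abs_of_nonneg hα, abs_of_nonneg hv0]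
    _ ≤ α t * (1 * (2 * B + B)) := by
        grw [hv1, abs_add_le, hres, hwω]
    _ = α t * (3 * B) := by ring

theorem norm_iterate_delay_sub_le (hx : IsAsyncSA μ ℱ F α i w x) (hF : ContractingWith γ F)
    (hfix : Function.IsFixedPt F xstar) {h t0 : ℝ} (hα : ∀ t, α t = h / (t + t0)) {τ : ℕ}
    (hτ : τ ≤ t0) (ht0 : 0 < t0) (hh : 0 ≤ h) {ω : Ω} (hxω : ∀ t, ‖x t ω - xstar‖ ≤ B)
    (hwω : ∀ t, |w t ω| ≤ B) (n : ℕ) :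
    ‖x (τ + n) ω - x n ω‖ ≤ τ * (2 * h / (τ + t0 + n) * (3 * B)) := by
  have hα0 (k : ℕ) : 0 ≤ α k := by
    rw [hα]
    positivity
  have hα_le (k : ℕ) (hk : n ≤ k) : α k ≤ 2 * h / (τ + t0 + n) := by
    have hk' : (n : ℝ) ≤ k := by exact_mod_cast hk
    rw [hα, div_le_div_iff₀ (by positivity) (by positivity)]
    nlinarith [n.cast_nonneg (α := ℝ)]
  rw [← dist_eq_norm, dist_comm]
  calc dist (x n ω) (x (τ + n) ω) ≤ ∑ k ∈ Ico n (τ + n), 2 * h / (τ + t0 + n) * (3 * B) := by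
        refine dist_le_Ico_sum_of_dist_le (f := fun t ↦ x t ω) (Nat.le_add_left n τ)
          fun {k} hk _ ↦ ?_
        rw [dist_comm, dist_eq_norm]
        grw [hx.norm_iterate_succ_sub_le hF hfix (hα0 k) (hxω k) (hwω k), hα_le k hk]
    _ = τ * (2 * h / (τ + t0 + n) * (3 * B)) := by simp

theorem abs_residual_drift_le (hx : IsAsyncSA μ ℱ F α i w x) (hF : ContractingWith γ F)
    (hfix : Function.IsFixedPt F xstar) {h t0 : ℝ} (hα : ∀ t, α t = h / (t + t0)) {τ : ℕ}
    (hτ : τ ≤ t0) (ht0 : 0 < t0) (hh : 0 ≤ h) {ω : Ω} (hxω : ∀ t, ‖x t ω - xstar‖ ≤ B)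
    (hwω : ∀ t, |w t ω| ≤ B) (n : ℕ) (j : ι) :
    |(F (x (τ + n) ω) j - x (τ + n) ω j) - (F (x n ω) j - x n ω j)| ≤
      12 * h * τ * B / (τ + t0 + n) := by
  calc |(F (x (τ + n) ω) j - x (τ + n) ω j) - (F (x n ω) j - x n ω j)|
      ≤ 2 * ‖x (τ + n) ω - x n ω‖ :=
        (norm_le_pi_norm ((F (x (τ + n) ω) - x (τ + n) ω) - (F (x n ω) - x n ω)) j).trans
          (norm_residual_sub_residual_le hF _ _)
    _ ≤ 2 * (τ * (2 * h / (τ + t0 + n) * (3 * B))) := by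
        grw [hx.norm_iterate_delay_sub_le hF hfix hα hτ ht0 hh hxω hwω n]
    _ = 12 * h * τ * B / (τ + t0 + n) := by ring

theorem norm_iterate_sub_le_of_noise_le (hx : IsAsyncSA μ ℱ F α i w x) (hF : ContractingWith γ F)
    (hfix : Function.IsFixedPt F xstar) {h t0 : ℝ} (hα : ∀ t, α t = h / (t + t0)) {τ N : ℕ}
    (hτ : τ ≤ t0) (hh1 : 1 ≤ h) (hht0 : h ≤ t0) {σ : ℝ} (hσ : 0 < σ)
    (hh : 2 ≤ σ * h * (1 - γ)) {c C : ℝ} (hc : 0 ≤ c) (hCτ : 24 * h * τ * B ≤ σ * (1 - γ) * C)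
    (hC₀ : (τ + t0) * B ≤ C) {ω : Ω} (hxω : ∀ t, ‖x t ω - xstar‖ ≤ B) (hwω : ∀ t, |w t ω| ≤ B)
    (hd : ∀ n j, visitProb μ ℱ τ i j n ω ∈ Set.Icc σ 1)
    (hM : ∀ n ≤ N, ‖fun j ↦ discountedSum (fun k ↦ 1 - h / (τ + t0 + k) * σ)
      (fun k ↦ h / (τ + t0 + k) * delayedNoise μ ℱ F τ i w x j k ω) n‖ ≤ c / √(τ + t0 + n)) :
    ‖x (τ + N) ω - xstar‖ ≤ errorBound (5 * c / (1 - γ)) C (τ + t0 + N) := by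
  have := τ.cast_nonneg (α := ℝ)
  have hC : 0 ≤ C := (mul_nonneg (by linarith) B.2).trans hC₀
  refine norm_error_le_of_recursion (e := fun n ↦ x (τ + n) ω - xstar)
    (g := fun n j ↦ F (x (τ + n) ω) j - xstar j) (d := fun n j ↦ visitProb μ ℱ τ i j n ω)
    (φ := fun n j ↦ (visit i j (τ + n) ω - visitProb μ ℱ τ i j n ω) *
      ((F (x (τ + n) ω) j - x (τ + n) ω j) - (F (x n ω) j - x n ω j)))
    γ.2 hF.1 hσ.le (by linarith) hh (by linarith) (by linarith) hc hC ?_ ?_ ?_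
    (fun n _ j ↦ hd n j) ?_ hM
  · rw [le_div_iff₀ (by linarith), mul_comm]
    grw [← hC₀, add_zero, hxω]
    linarith
  · intro n _ j
    simp only [← add_assoc, Pi.sub_apply, hx.iterate_succ_apply, hα, delayedNoise]
    push_cast
    ring_nf
  · intro n _ j
    calc |F (x (τ + n) ω) j - xstar j| = ‖(F (x (τ + n) ω) - F xstar) j‖ := by
          rw [hfix.eq]
          rfl
      _ ≤ γ * ‖x (τ + n) ω - xstar‖ :=
          (norm_le_pi_norm _ j).trans (hF.toLipschitzWith.norm_sub_le _ _)
  · intro n _ j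
    have hs : 0 < τ + t0 + n := by linarith [n.cast_nonneg (α := ℝ)]
    have hvd : |visit i j (τ + n) ω - visitProb μ ℱ τ i j n ω| ≤ 1 := by
      obtain ⟨hv0, hv1⟩ := visit_mem_Icc i j (τ + n) ω
      exact abs_le.mpr ⟨by linarith [(hd n j).2], by linarith [(hd n j).1]⟩
    calc |_| ≤ 1 * (12 * h * τ * B / (τ + t0 + n)) := by
          rw [abs_mul]
          gcongr
          exact hx.abs_residual_drift_le hF hfix hα hτ (by linarith) (by linarith) hxω hwω n j
      _ = 24 * h * τ * B / (τ + t0 + n) / 2 := by ring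
      _ ≤ σ * (1 - γ) * C / (τ + t0 + n) / 2 := by gcongr
      _ = σ * (1 - γ) * (C / (τ + t0 + n)) / 2 := by ring

end Path

variable [IsProbabilityMeasure μ]

theorem integrable_visit (hx : IsAsyncSA μ ℱ F α i w x) (j : ι) (t : ℕ) :
    Integrable (visit i j t) μ :=
  .of_bound ((hx.measurable_visit j t).mono (ℱ.le t) le_rfl).aestronglyMeasurable 1 <|
    .of_forall fun ω ↦ by
      rw [Real.norm_of_nonneg (visit_mem_Icc i j t ω).1]
      exact (visit_mem_Icc i j t ω).2

theorem visitProb_mem_Icc (hx : IsAsyncSA μ ℱ F α i w x) (τ : ℕ) (j : ι) (n : ℕ) :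
    ∀ᵐ ω ∂μ, visitProb μ ℱ τ i j n ω ∈ Set.Icc 0 1 := by
  have hint := hx.integrable_visit j (τ + n)
  have h0 : 0 ≤ᵐ[μ] visitProb μ ℱ τ i j n :=
    condExp_nonneg (.of_forall fun ω ↦ (visit_mem_Icc i j _ ω).1)
  have h1 : visitProb μ ℱ τ i j n ≤ᵐ[μ] μ[fun _ ↦ (1 : ℝ) | ℱ n] :=
    condExp_mono hint (integrable_const 1) (.of_forall fun ω ↦ (visit_mem_Icc i j _ ω).2)
  rw [condExp_const (ℱ.le n)] at h1
  filter_upwards [h0, h1] with ω h0ω h1ω using ⟨h0ω, h1ω⟩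

theorem le_one_of_le_visitProb (hx : IsAsyncSA μ ℱ F α i w x) {σ : ℝ} {τ n : ℕ} {j : ι}
    (hσ : ∀ᵐ ω ∂μ, σ ≤ visitProb μ ℱ τ i j n ω) : σ ≤ 1 := by
  obtain ⟨ω, hσω, hω⟩ := (hσ.and (hx.visitProb_mem_Icc τ j n)).exists
  exact hσω.trans hω.2

theorem abs_visit_sub_visitProb_le (hx : IsAsyncSA μ ℱ F α i w x) (τ : ℕ) (j : ι) (n : ℕ) :
    ∀ᵐ ω ∂μ, |visit i j (τ + n) ω - visitProb μ ℱ τ i j n ω| ≤ 1 := by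
  filter_upwards [hx.visitProb_mem_Icc τ j n] with ω ⟨h0, h1⟩
  obtain ⟨hv0, hv1⟩ := visit_mem_Icc i j (τ + n) ω
  exact abs_le.mpr ⟨by linarith, by linarith⟩

variable [Fintype ι] {γ B : ℝ≥0} {xstar : ι → ℝ}

theorem abs_delayedNoise_le (hx : IsAsyncSA μ ℱ F α i w x) (hF : ContractingWith γ F)
    (hfix : Function.IsFixedPt F xstar) (hxB : ∀ t, ∀ᵐ ω ∂μ, ‖x t ω - xstar‖ ≤ B)
    (hwB : ∀ t, ∀ᵐ ω ∂μ, |w t ω| ≤ B) (τ : ℕ) (j : ι) (n : ℕ) :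
    ∀ᵐ ω ∂μ, |delayedNoise μ ℱ F τ i w x j n ω| ≤ 3 * B := by
  filter_upwards [hx.abs_visit_sub_visitProb_le τ j n, hxB n, hwB (τ + n)] with ω hv hxω hwω
  obtain ⟨hv0, hv1⟩ := visit_mem_Icc i j (τ + n) ω
  calc |delayedNoise μ ℱ F τ i w x j n ω|
      ≤ |visit i j (τ + n) ω - visitProb μ ℱ τ i j n ω| * |F (x n ω) j - x n ω j| +
          visit i j (τ + n) ω * |w (τ + n) ω| := by
        refine (abs_add_le _ _).trans_eq ?_
        rw [abs_mul, abs_mul, abs_of_nonneg hv0]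
    _ ≤ 1 * (2 * B) + 1 * B := by
        gcongr
        exact abs_residual_apply_le hF hfix hxω j
    _ = 3 * B := by ring

theorem condExp_delayedNoise (hx : IsAsyncSA μ ℱ F α i w x) (hF : ContractingWith γ F)
    (hfix : Function.IsFixedPt F xstar) (hxB : ∀ t, ∀ᵐ ω ∂μ, ‖x t ω - xstar‖ ≤ B)
    (hwB : ∀ t, ∀ᵐ ω ∂μ, |w t ω| ≤ B) (τ : ℕ) (j : ι) (n : ℕ) :
    μ[delayedNoise μ ℱ F τ i w x j n | ℱ n] =ᵐ[μ] 0 := by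
  have hv := hx.integrable_visit j (τ + n)
  have hvd : Integrable (visit i j (τ + n) - visitProb μ ℱ τ i j n) μ := hv.sub integrable_condExp
  have hw : Integrable (w (τ + n)) μ :=
    .of_bound ((hx.measurable_noise _).mono (ℱ.le _) le_rfl).aestronglyMeasurable B (hwB _)
  have hres := (hx.measurable_residual hF.toLipschitzWith.continuous.measurable j
    n).stronglyMeasurable
  have hres_bdd : ∀ᵐ ω ∂μ, ‖F (x n ω) j - x n ω j‖ ≤ 2 * B := by
    filter_upwards [hxB n] with ω hω using abs_residual_apply_le hF hfix hω j
  have hvd_res : Integrable (fun ω ↦ (F (x n ω) j - x n ω j) *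
      (visit i j (τ + n) - visitProb μ ℱ τ i j n) ω) μ :=
    hvd.bdd_mul (hres.mono (ℱ.le n)).aestronglyMeasurable hres_bdd
  have hv_w : Integrable (fun ω ↦ visit i j (τ + n) ω * w (τ + n) ω) μ :=
    hv.mul_bdd hw.aestronglyMeasurable (hwB _)
  have hvd_res_condExp := condExp_mul_eq_zero hres hvd_res hvd
    (condExp_sub_condExp_eq_zero (ℱ.le n) hv)
  have hv_w_condExp := condExp_eq_zero_of_le (ℱ.mono (Nat.le_add_left n τ)) (ℱ.le _)
    (condExp_mul_eq_zero (hx.measurable_visit j _).stronglyMeasurable hv_w hw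
      (hx.condExp_noise (τ + n)))
  have hsplit : delayedNoise μ ℱ F τ i w x j n =
      (fun ω ↦ (F (x n ω) j - x n ω j) * (visit i j (τ + n) - visitProb μ ℱ τ i j n) ω) +
        fun ω ↦ visit i j (τ + n) ω * w (τ + n) ω := by
    ext ω
    simp only [delayedNoise, Pi.add_apply, Pi.sub_apply, mul_comm]
  rw [hsplit]
  filter_upwards [condExp_add hvd_res hv_w (ℱ n), hvd_res_condExp, hv_w_condExp] with ω h h1 h2
  rw [h, Pi.add_apply, h1, h2, Pi.zero_apply, add_zero]

theorem measureReal_abs_noise_ge_le (hx : IsAsyncSA μ ℱ F α i w x) (hF : ContractingWith γ F)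
    (hfix : Function.IsFixedPt F xstar) (hxB : ∀ t, ∀ᵐ ω ∂μ, ‖x t ω - xstar‖ ≤ B)
    (hwB : ∀ t, ∀ᵐ ω ∂μ, |w t ω| ≤ B) (hB : 0 < B) (τ : ℕ) {σ h s₀ L : ℝ} (hσ : 0 < σ)
    (hσ1 : σ ≤ 1) (hσh : 2 ≤ σ * h) (hs₀ : 4 * h ≤ s₀) (hL : 0 ≤ L) (j : ι) (n : ℕ) :
    μ.real {ω | 3 * B * √(2 * (τ + 1) * h * L / σ) / √(s₀ + n) ≤
      |discountedSum (fun k ↦ 1 - h / (s₀ + k) * σ)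
        (fun k ↦ h / (s₀ + k) * delayedNoise μ ℱ F τ i w x j k ω) n|} ≤ 2 * Real.exp (-L) := by
  have hh : 0 < h := by
    by_contra! hh
    nlinarith
  have hs : 0 < s₀ + n := by linarith [n.cast_nonneg (α := ℝ)]
  obtain ⟨V, hV⟩ : ∃ V : ℝ≥0, V = (τ + 1) * (h / σ / (s₀ + n) * (3 * B) ^ 2) :=
    ⟨⟨_, by positivity⟩, rfl⟩
  have hsub := hasSubgaussianMGF_discountedSum τ.succ_pos
    (fun k ↦ hx.stronglyMeasurable_delayedNoise hF.toLipschitzWith.continuous.measurable τ j k)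
    (b := 3 * B) (hx.abs_delayedNoise_le hF hfix hxB hwB τ j)
    (hx.condExp_delayedNoise hF hfix hxB hwB τ j) (fun k ↦ 1 - h / (s₀ + k) * σ)
    (fun k ↦ h / (s₀ + k)) n (V := V) (by
      rw [hV]
      push_cast
      gcongr
      exact discountedSum_sq_le hσ hσ1 hσh hs₀ n)
  refine (measureReal_abs_ge_le_two_mul_exp hsub (by positivity)).trans_eq ?_
  have : (0 : ℝ) < B := hB
  congr 2
  rw [hV, div_pow, mul_pow, Real.sq_sqrt (by positivity), Real.sq_sqrt hs.le]
  field_simp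

theorem measureReal_exists_noise_gt_le (hx : IsAsyncSA μ ℱ F α i w x) (hF : ContractingWith γ F)
    (hfix : Function.IsFixedPt F xstar) (hxB : ∀ t, ∀ᵐ ω ∂μ, ‖x t ω - xstar‖ ≤ B)
    (hwB : ∀ t, ∀ᵐ ω ∂μ, |w t ω| ≤ B) (hB : 0 < B) (τ : ℕ) {σ h s₀ L : ℝ} (hσ : 0 < σ)
    (hσ1 : σ ≤ 1) (hσh : 2 ≤ σ * h) (hs₀ : 4 * h ≤ s₀) (hL : 0 ≤ L) (N : ℕ) :
    μ.real {ω | ∃ n ≤ N, 3 * B * √(2 * (τ + 1) * h * L / σ) / √(s₀ + n) <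
      ‖fun j ↦ discountedSum (fun k ↦ 1 - h / (s₀ + k) * σ)
        (fun k ↦ h / (s₀ + k) * delayedNoise μ ℱ F τ i w x j k ω) n‖} ≤
      N * Fintype.card ι * (2 * Real.exp (-L)) := by
  set M : ℕ → Ω → ι → ℝ := fun n ω j ↦ discountedSum (fun k ↦ 1 - h / (s₀ + k) * σ)
    (fun k ↦ h / (s₀ + k) * delayedNoise μ ℱ F τ i w x j k ω) n
  set c : ℝ := 3 * B * √(2 * (τ + 1) * h * L / σ)
  set bad : ι → ℕ → Set Ω := fun j n ↦ {ω | c / √(s₀ + n) ≤ |M n ω j|}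
  have hcover : {ω | ∃ n ≤ N, c / √(s₀ + n) < ‖M n ω‖} ⊆
      ⋃ n ∈ range N, ⋃ j, bad j (n + 1) := by
    rintro ω ⟨n, hn, hω⟩
    obtain _ | n := n
    · have hM₀ : M 0 ω = 0 := rfl
      rw [hM₀, norm_zero] at hω
      exact absurd hω (not_lt.mpr (by positivity))
    obtain ⟨j, hj⟩ : ∃ j, c / √(s₀ + (n + 1 : ℕ)) ≤ |M (n + 1) ω j| := by
      by_contra! hlt
      exact hω.not_ge ((pi_norm_le_iff_of_nonneg (by positivity)).mpr fun j ↦ (hlt j).le)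
    exact Set.mem_biUnion (mem_range.mpr hn) (Set.mem_iUnion_of_mem j hj)
  calc μ.real {ω | ∃ n ≤ N, c / √(s₀ + n) < ‖M n ω‖}
      ≤ μ.real (⋃ n ∈ range N, ⋃ j, bad j (n + 1)) := measureReal_mono hcover (measure_ne_top _ _)
    _ ≤ ∑ n ∈ range N, ∑ j, μ.real (bad j (n + 1)) :=
        (measureReal_biUnion_finset_le _ _).trans
          (sum_le_sum fun n _ ↦ measureReal_iUnion_fintype_le _)
    _ ≤ ∑ n ∈ range N, ∑ _j : ι, 2 * Real.exp (-L) := by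
        gcongr with n _ j
        exact hx.measureReal_abs_noise_ge_le hF hfix hxB hwB hB τ hσ hσ1 hσh hs₀ hL j (n + 1)
    _ = N * Fintype.card ι * (2 * Real.exp (-L)) := by
        simp only [sum_const, card_range, card_univ, nsmul_eq_mul, mul_assoc]

theorem measureReal_errorBound_lt_norm_iterate_sub_le (hx : IsAsyncSA μ ℱ F α i w x)
    (hF : ContractingWith γ F) (hfix : Function.IsFixedPt F xstar)
    (hxB : ∀ t, ∀ᵐ ω ∂μ, ‖x t ω - xstar‖ ≤ B) (hwB : ∀ t, ∀ᵐ ω ∂μ, |w t ω| ≤ B) (hB : 0 < B)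
    {h t0 : ℝ} (hα : ∀ t, α t = h / (t + t0)) {τ : ℕ} (hτ : τ ≤ t0) (hht0 : 4 * h ≤ t0) {σ : ℝ}
    (hσ : 0 < σ) (hσ1 : σ ≤ 1) (hh : 2 ≤ σ * h * (1 - γ))
    (hexpl : ∀ n j, ∀ᵐ ω ∂μ, σ ≤ visitProb μ ℱ τ i j n ω) {L : ℝ} (hL : 0 ≤ L) (N : ℕ) :
    μ.real {ω | errorBound (15 * B / (1 - γ) * √(2 * (τ + 1) * h * L / σ))
      (B * max (24 * h * τ / (σ * (1 - γ))) (τ + t0)) (τ + t0 + N) < ‖x (τ + N) ω - xstar‖} ≤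
      N * Fintype.card ι * (2 * Real.exp (-L)) := by
  have hγ : (0 : ℝ) < 1 - γ := sub_pos.mpr hF.1
  have hh0 : 0 ≤ h := by
    by_contra! hh0
    nlinarith [mul_pos hσ hγ]
  have hσh : 2 ≤ σ * h := hh.trans (mul_le_of_le_one_right (by positivity) (by simp))
  have hh1 : 1 ≤ h := by nlinarith
  have hCτ : 24 * h * τ * B ≤ σ * (1 - γ) * (B * max (24 * h * τ / (σ * (1 - γ))) (τ + t0)) := by
    grw [← le_max_left]
    field_simp
    rfl
  have hC₀ : (τ + t0) * B ≤ B * max (24 * h * τ / (σ * (1 - γ))) (τ + t0) := by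
    grw [← le_max_right, mul_comm]
  have hc : 15 * B / (1 - γ) * √(2 * (τ + 1) * h * L / σ) =
      5 * (3 * B * √(2 * (τ + 1) * h * L / σ)) / (1 - γ) := by ring
  rw [hc]
  refine (ENNReal.toReal_mono (measure_ne_top _ _) (measure_mono_ae ?_)).trans
    (hx.measureReal_exists_noise_gt_le hF hfix hxB hwB hB τ (s₀ := τ + t0) hσ hσ1 hσh
      (by linarith [τ.cast_nonneg (α := ℝ)]) hL N)
  filter_upwards [ae_all_iff.mpr hxB, ae_all_iff.mpr hwB,
    ae_all_iff.mpr fun n ↦ ae_all_iff.mpr (hexpl n),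
    ae_all_iff.mpr fun n ↦ ae_all_iff.mpr fun j ↦ hx.visitProb_mem_Icc τ j n] with ω hxω hwω hσd hd
  refine fun hω ↦ by_contra fun hM ↦ hω.not_ge ?_
  exact hx.norm_iterate_sub_le_of_noise_le hF hfix hα hτ hh1 (by linarith) hσ hh (by positivity)
    hCτ hC₀ hxω hwω (fun n j ↦ ⟨hσd n j, (hd n j).2⟩)
    fun n hn ↦ not_lt.mp fun hlt ↦ hM ⟨n, hn, hlt⟩

theorem ofReal_one_sub_le_measure_norm_iterate_sub_le (hx : IsAsyncSA μ ℱ F α i w x)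
    (hF : ContractingWith γ F) (hfix : Function.IsFixedPt F xstar)
    (hxB : ∀ t, ∀ᵐ ω ∂μ, ‖x t ω - xstar‖ ≤ B) (hwB : ∀ t, ∀ᵐ ω ∂μ, |w t ω| ≤ B) {h t0 : ℝ}
    (hα : ∀ t, α t = h / (t + t0)) {τ : ℕ} (hτ : τ ≤ t0) (hht0 : 4 * h ≤ t0) {σ : ℝ} (hσ : 0 < σ)
    (hh : 2 ≤ σ * h * (1 - γ)) (hexpl : ∀ n j, ∀ᵐ ω ∂μ, σ ≤ visitProb μ ℱ τ i j n ω) (T : ℕ)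
    {δ : ℝ} (hδ : 0 < δ) (hδ1 : δ < 1) :
    ENNReal.ofReal (1 - δ) ≤ μ {ω | ‖x T ω - xstar‖ ≤ errorBound
      (15 * B / (1 - γ) * √(2 * (τ + 1) * h * Real.log (2 * T * Fintype.card ι / δ) / σ))
      (B * max (24 * h * τ / (σ * (1 - γ))) (τ + t0)) (T + t0)} := by
  apply ofReal_one_sub_le_measure_of_not
  simp only [not_le]
  have hγ : (0 : ℝ) < 1 - γ := sub_pos.mpr hF.1
  have hh0 : 0 < h := by
    by_contra! hh0
    nlinarith [mul_pos hσ hγ]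
  by_cases htriv : B = 0 ∨ T ≤ τ
  · have hB : B * (T + t0) ≤ B * (τ + t0) := by
      obtain rfl | hTτ := htriv
      · simp
      · gcongr
    rw [measureReal_def, measure_eq_zero_iff_ae_notMem.mpr, ENNReal.toReal_zero]
    · exact hδ.le
    filter_upwards [hxB T] with ω hω
    have hT : 0 < T + t0 := by linarith [T.cast_nonneg (α := ℝ)]
    refine not_lt.mpr (hω.trans (le_errorBound_mul (by positivity) hT ?_))
    grw [hB, ← le_max_right]
  obtain ⟨hB, hTτ⟩ := not_or.mp htriv
  obtain ⟨N, rfl⟩ := Nat.exists_eq_add_of_le (not_le.mp hTτ).le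
  obtain ⟨ω₀⟩ := nonempty_of_isProbabilityMeasure μ
  have : Nonempty ι := ⟨i 0 ω₀⟩
  have hT : (1 : ℝ) ≤ (τ + N : ℕ) := by exact_mod_cast Nat.one_le_of_lt (not_le.mp hTτ)
  have hι : (1 : ℝ) ≤ Fintype.card ι := by exact_mod_cast Fintype.card_pos
  have hlog : 1 ≤ 2 * (τ + N : ℕ) * Fintype.card ι / δ := by
    rw [one_le_div hδ]
    nlinarith
  calc μ.real _ ≤ N * Fintype.card ι *
        (2 * Real.exp (-Real.log (2 * (τ + N : ℕ) * Fintype.card ι / δ))) := by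
        rw [Nat.cast_add, add_right_comm, ← Nat.cast_add]
        exact hx.measureReal_errorBound_lt_norm_iterate_sub_le hF hfix hxB hwB
          (pos_iff_ne_zero.mpr hB) hα hτ hht0 hσ (hx.le_one_of_le_visitProb (hexpl 0 (i 0 ω₀)))
          hh hexpl (Real.log_nonneg hlog) N
    _ ≤ δ := by
        rw [← Real.log_inv, Real.exp_log (by positivity)]
        field_simp
        exact_mod_cast Nat.le_add_left N τ

end IsAsyncSA

/-! ### Discounted Markov decision processes -/

/-- A finite Markov decision process with transition probabilities `P`, mean rewards `R` bounded
by `rbar` and discount factor `γ`. -/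
structure DiscountedMDP (S A : Type*) [Fintype S] where
  P : S → A → S → ℝ
  R : S → A → ℝ
  γ : ℝ≥0
  rbar : ℝ≥0
  P_nonneg : ∀ s a s', 0 ≤ P s a s'
  sum_P : ∀ s a, ∑ s', P s a s' = 1
  γ_lt_one : γ < 1
  abs_R_le : ∀ s a, |R s a| ≤ rbar

/-- The value at the state `s` of acting greedily with respect to the `Q`-function `q`. -/
noncomputable def greedyValue {S A : Type*} (q : S × A → ℝ) (s : S) : ℝ := ⨆ a, q (s, a)

theorem measurable_greedyValue {S A : Type*} [Countable A] (s : S) :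
    Measurable fun q : S × A → ℝ ↦ greedyValue q s :=
  .iSup fun a ↦ measurable_pi_apply (s, a)

section GreedyValue

variable {S A : Type*} [Fintype S] [Fintype A] [Nonempty A]

theorem abs_greedyValue_sub_greedyValue_le (q q' : S × A → ℝ) (s : S) :
    |greedyValue q s - greedyValue q' s| ≤ ‖q - q'‖ := by
  have hle (q q' : S × A → ℝ) : greedyValue q s ≤ greedyValue q' s + ‖q - q'‖ := by
    refine ciSup_le fun a ↦ ?_
    have hq : q (s, a) - q' (s, a) ≤ ‖q - q'‖ :=
      (le_abs_self _).trans (norm_le_pi_norm (q - q') (s, a))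
    have hq' : q' (s, a) ≤ greedyValue q' s :=
      le_ciSup (f := fun a ↦ q' (s, a)) (Finite.bddAbove_range _) a
    linarith
  have := hle q' q
  rw [norm_sub_rev] at this
  exact abs_sub_le_iff.mpr ⟨by linarith [hle q q'], by linarith⟩

theorem abs_greedyValue_le (q : S × A → ℝ) (s : S) : |greedyValue q s| ≤ ‖q‖ := by
  simpa [greedyValue] using abs_greedyValue_sub_greedyValue_le q 0 s

end GreedyValue

namespace DiscountedMDP

variable {S A : Type*} [Fintype S] (M : DiscountedMDP S A)

/-- The Bellman optimality operator. -/
noncomputable def bellman (q : S × A → ℝ) (p : S × A) : ℝ :=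
  M.R p.1 p.2 + M.γ * ∑ s', M.P p.1 p.2 s' * greedyValue q s'

/-- The bound `rbar / (1 - γ)` on the value functions of the process. -/
noncomputable def valueBound : ℝ≥0 := M.rbar / (1 - M.γ)

theorem one_sub_γ_pos : (0 : ℝ) < 1 - M.γ := sub_pos.mpr M.γ_lt_one

theorem coe_valueBound : (M.valueBound : ℝ) = M.rbar / (1 - M.γ) := by
  rw [valueBound, NNReal.coe_div, NNReal.coe_sub M.γ_lt_one.le, NNReal.coe_one]

theorem rbar_add_γ_mul_valueBound : M.rbar + M.γ * M.valueBound = (M.valueBound : ℝ) := by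
  have := M.one_sub_γ_pos.ne'
  rw [coe_valueBound]
  field_simp
  ring

theorem abs_sum_P_mul_le {f : S → ℝ} {c : ℝ} (hf : ∀ s', |f s'| ≤ c) (s : S) (a : A) :
    |∑ s', M.P s a s' * f s'| ≤ c := by
  calc |∑ s', M.P s a s' * f s'| ≤ ∑ s', M.P s a s' * c := by
        refine (abs_sum_le_sum_abs _ _).trans (sum_le_sum fun s' _ ↦ ?_)
        rw [abs_mul, abs_of_nonneg (M.P_nonneg s a s')]
        exact mul_le_mul_of_nonneg_left (hf s') (M.P_nonneg s a s')
    _ = c := by rw [← sum_mul, M.sum_P, one_mul]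

theorem measurable_bellman [Countable A] : Measurable M.bellman :=
  measurable_pi_lambda _ fun _ ↦ ((univ.measurable_fun_sum fun s' _ ↦
    (measurable_greedyValue s').const_mul _).const_mul _).const_add _

variable [Fintype A] [Nonempty A]

theorem contractingWith_bellman : ContractingWith M.γ M.bellman := by
  refine ⟨M.γ_lt_one, LipschitzWith.of_dist_le_mul fun q q' ↦ ?_⟩
  rw [dist_eq_norm, dist_eq_norm, pi_norm_le_iff_of_nonneg (by positivity)]
  rintro ⟨s, a⟩
  calc ‖(M.bellman q - M.bellman q') (s, a)‖
      = M.γ * |∑ s', M.P s a s' * (greedyValue q s' - greedyValue q' s')| := by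
        simp only [mul_sub, sum_sub_distrib]
        rw [Pi.sub_apply, bellman, bellman, add_sub_add_left_eq_sub, ← mul_sub, Real.norm_eq_abs,
          abs_mul, NNReal.abs_eq]
    _ ≤ M.γ * ‖q - q'‖ := by
        gcongr
        exact M.abs_sum_P_mul_le (abs_greedyValue_sub_greedyValue_le q q') s a

theorem norm_bellman_le (q : S × A → ℝ) : ‖M.bellman q‖ ≤ M.rbar + M.γ * ‖q‖ := by
  refine (pi_norm_le_iff_of_nonneg (by positivity)).mpr fun p ↦ ?_
  calc |M.bellman q p| ≤ |M.R p.1 p.2| + M.γ * |∑ s', M.P p.1 p.2 s' * greedyValue q s'| := by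
        refine (abs_add_le _ _).trans_eq ?_
        rw [abs_mul, NNReal.abs_eq]
    _ ≤ M.rbar + M.γ * ‖q‖ := by
        gcongr
        · exact M.abs_R_le _ _
        · exact M.abs_sum_P_mul_le (abs_greedyValue_le q) _ _

theorem norm_le_valueBound_of_isFixedPt {q : S × A → ℝ} (hq : Function.IsFixedPt M.bellman q) :
    ‖q‖ ≤ M.valueBound := by
  have := M.norm_bellman_le q
  rw [hq.eq] at this
  rw [coe_valueBound, le_div_iff₀ M.one_sub_γ_pos]
  linarith

theorem abs_target_le {ρ : ℝ} (hρ : |ρ| ≤ M.rbar) {q : S × A → ℝ} (hq : ‖q‖ ≤ M.valueBound)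
    (s' : S) : |ρ + M.γ * greedyValue q s'| ≤ M.valueBound := by
  calc |ρ + M.γ * greedyValue q s'| ≤ |ρ| + M.γ * |greedyValue q s'| := by
        refine (abs_add_le _ _).trans_eq ?_
        rw [abs_mul, NNReal.abs_eq]
    _ ≤ M.rbar + M.γ * M.valueBound := by grw [hρ, abs_greedyValue_le, hq]
    _ = M.valueBound := M.rbar_add_γ_mul_valueBound

end DiscountedMDP

/-! ### Asynchronous Q-learning -/

theorem measurable_apply_of_countable {Ω Y : Type*} {m : MeasurableSpace Ω} [Countable Y]
    {X : Ω → Y} {g : Ω → Y → ℝ} (hX : ∀ y, MeasurableSet {ω | X ω = y})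
    (hg : ∀ y, Measurable fun ω ↦ g ω y) : Measurable fun ω ↦ g ω (X ω) := by
  let _ : MeasurableSpace Y := ⊤
  exact (measurable_from_prod_countable_left (f := fun q : Ω × Y ↦ g q.1 q.2) hg).comp
    (measurable_id.prodMk (measurable_to_countable' hX))

theorem condExp_apply_of_fintype {Ω Y : Type*} {m m0 : MeasurableSpace Ω} [Fintype Y]
    [DecidableEq Y] {μ : Measure Ω} [IsFiniteMeasure μ] {X : Ω → Y} {g : Ω → Y → ℝ}
    (hX : ∀ y, MeasurableSet {ω | X ω = y}) (hg : ∀ y, StronglyMeasurable[m] fun ω ↦ g ω y)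
    (hgi : ∀ y, Integrable (fun ω ↦ g ω y) μ) :
    μ[fun ω ↦ g ω (X ω) | m] =ᵐ[μ]
      fun ω ↦ ∑ y, g ω y * μ[fun ω ↦ if X ω = y then (1 : ℝ) else 0 | m] ω := by
  have hXm (y : Y) : Measurable fun ω ↦ if X ω = y then (1 : ℝ) else 0 :=
    Measurable.ite (hX y) measurable_const measurable_const
  have hX_le (y : Y) (ω : Ω) : ‖if X ω = y then (1 : ℝ) else 0‖ ≤ 1 := by
    split_ifs <;> simp
  have hXi (y : Y) : Integrable (fun ω ↦ if X ω = y then (1 : ℝ) else 0) μ :=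
    .of_bound (hXm y).aestronglyMeasurable 1 (.of_forall (hX_le y))
  have hgXi (y : Y) : Integrable (fun ω ↦ g ω y * if X ω = y then 1 else 0) μ :=
    (hgi y).mul_bdd (hXm y).aestronglyMeasurable (.of_forall (hX_le y))
  have hsplit : (fun ω ↦ g ω (X ω)) = ∑ y, fun ω ↦ g ω y * if X ω = y then 1 else 0 := by
    ext ω
    simp
  rw [hsplit]
  filter_upwards [condExp_finsetSum (fun y _ ↦ hgXi y) m, ae_all_iff.mpr fun y ↦
    condExp_mul_of_stronglyMeasurable_left (m := m) (hg y) (hgXi y) (hXi y)] with ω hsum hmul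
  rw [hsum, Finset.sum_apply]
  exact sum_congr rfl fun y _ ↦ hmul y

/-- Asynchronous Q-learning along a trajectory `(s t, a t, r t)` of the Markov decision process
`M`, with step sizes `α` and a possibly random initial `Q`-function. -/
structure IsAsyncQLearning {Ω S A : Type*} {m0 : MeasurableSpace Ω} [Fintype S] [Fintype A]
    [DecidableEq S] [DecidableEq A] (M : DiscountedMDP S A) (μ : Measure Ω) (ℱ : Filtration ℕ m0)
    (α : ℕ → ℝ) (s : ℕ → Ω → S) (a : ℕ → Ω → A) (r : ℕ → Ω → ℝ) (Q : ℕ → Ω → S × A → ℝ) :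
    Prop where
  measurableSet_state_action_eq : ∀ t p, MeasurableSet[ℱ t] {ω | (s t ω, a t ω) = p}
  measurable_reward : ∀ t, Measurable[ℱ (t + 1)] (r t)
  condExp_reward : ∀ t, μ[r t | ℱ t] =ᵐ[μ] fun ω ↦ M.R (s t ω) (a t ω)
  condExp_next_state : ∀ t s', μ[fun ω ↦ if s (t + 1) ω = s' then (1 : ℝ) else 0 | ℱ t] =ᵐ[μ]
    fun ω ↦ M.P (s t ω) (a t ω) s'
  abs_reward_le : ∀ t, ∀ᵐ ω ∂μ, |r t ω| ≤ M.rbar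
  measurable_init : Measurable[ℱ 0] (Q 0)
  norm_init_le : ∀ᵐ ω ∂μ, ‖Q 0 ω‖ ≤ M.valueBound
  update : ∀ t ω p, Q (t + 1) ω p = if p = (s t ω, a t ω) then
    (1 - α t) * Q t ω p + α t * (r t ω + M.γ * greedyValue (Q t ω) (s (t + 1) ω)) else Q t ω p

/-- The temporal-difference noise: the sampled Bellman target minus its conditional mean. -/
noncomputable def tdNoise {Ω S A : Type*} [Fintype S] (M : DiscountedMDP S A) (s : ℕ → Ω → S)
    (a : ℕ → Ω → A) (r : ℕ → Ω → ℝ) (Q : ℕ → Ω → S × A → ℝ) (t : ℕ) (ω : Ω) : ℝ :=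
  r t ω + M.γ * greedyValue (Q t ω) (s (t + 1) ω) - M.bellman (Q t ω) (s t ω, a t ω)

namespace IsAsyncQLearning

variable {Ω S A : Type*} {m0 : MeasurableSpace Ω} [Fintype S] [Fintype A] [DecidableEq S]
  [DecidableEq A] {M : DiscountedMDP S A} {μ : Measure Ω} {ℱ : Filtration ℕ m0} {α : ℕ → ℝ}
  {s : ℕ → Ω → S} {a : ℕ → Ω → A} {r : ℕ → Ω → ℝ} {Q : ℕ → Ω → S × A → ℝ}

theorem measurableSet_state_eq (hQ : IsAsyncQLearning M μ ℱ α s a r Q) (t : ℕ) (s' : S) :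
    MeasurableSet[ℱ t] {ω | s t ω = s'} := by
  have : {ω | s t ω = s'} = ⋃ a', {ω | (s t ω, a t ω) = (s', a')} := by
    ext ω
    simp
  rw [this]
  exact .iUnion fun a' ↦ hQ.measurableSet_state_action_eq t (s', a')

theorem measurable_greedyValue_next (hQ : IsAsyncQLearning M μ ℱ α s a r Q) {t : ℕ}
    (hQt : Measurable[ℱ t] (Q t)) :
    Measurable[ℱ (t + 1)] fun ω ↦ greedyValue (Q t ω) (s (t + 1) ω) :=
  measurable_apply_of_countable (hQ.measurableSet_state_eq (t + 1)) fun s' ↦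
    (measurable_greedyValue s').comp (hQt.mono (ℱ.mono t.le_succ) le_rfl)

theorem measurable_iterate (hQ : IsAsyncQLearning M μ ℱ α s a r Q) (t : ℕ) :
    Measurable[ℱ t] (Q t) := by
  induction t with
  | zero => exact hQ.measurable_init
  | succ t ih =>
    have hle : ℱ t ≤ ℱ (t + 1) := ℱ.mono t.le_succ
    have hQt (p : S × A) : Measurable[ℱ (t + 1)] fun ω ↦ Q t ω p :=
      (measurable_pi_apply p).comp (ih.mono hle le_rfl)
    refine @measurable_pi_lambda _ _ _ (_) _ _ fun p ↦ ?_
    simp only [hQ.update, eq_comm (a := p)]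
    exact Measurable.ite (hle _ (hQ.measurableSet_state_action_eq t p))
      (((hQt p).const_mul _).add (((hQ.measurable_reward t).add
        ((hQ.measurable_greedyValue_next ih).const_mul _)).const_mul _)) (hQt p)

theorem measurable_bellman_iterate (hQ : IsAsyncQLearning M μ ℱ α s a r Q) (t : ℕ) :
    Measurable[ℱ t] fun ω ↦ M.bellman (Q t ω) (s t ω, a t ω) :=
  measurable_apply_of_countable (hQ.measurableSet_state_action_eq t) fun p ↦
    (measurable_pi_apply p).comp (M.measurable_bellman.comp (hQ.measurable_iterate t))

theorem measurable_tdNoise (hQ : IsAsyncQLearning M μ ℱ α s a r Q) (t : ℕ) :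
    Measurable[ℱ (t + 1)] (tdNoise M s a r Q t) :=
  ((hQ.measurable_reward t).add
    ((hQ.measurable_greedyValue_next (hQ.measurable_iterate t)).const_mul _)).sub
      ((hQ.measurable_bellman_iterate t).mono (ℱ.mono t.le_succ) le_rfl)

variable [Nonempty A]

theorem norm_iterate_le (hQ : IsAsyncQLearning M μ ℱ α s a r Q) (hα : ∀ t, α t ∈ Set.Icc 0 1)
    (t : ℕ) : ∀ᵐ ω ∂μ, ‖Q t ω‖ ≤ M.valueBound := by
  induction t with
  | zero => exact hQ.norm_init_le
  | succ t ih =>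
    filter_upwards [ih, hQ.abs_reward_le t] with ω hω hr
    refine (pi_norm_le_iff_of_nonneg M.valueBound.coe_nonneg).mpr fun p ↦ ?_
    have hQp : |Q t ω p| ≤ M.valueBound := (norm_le_pi_norm (Q t ω) p).trans hω
    rw [hQ.update, Real.norm_eq_abs]
    split_ifs
    · obtain ⟨hα0, hα1⟩ := hα t
      refine (abs_add_le _ _).trans ?_
      rw [abs_mul, abs_mul, abs_of_nonneg hα0, abs_of_nonneg (sub_nonneg.mpr hα1)]
      refine (add_le_add (mul_le_mul_of_nonneg_left hQp (sub_nonneg.mpr hα1))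
        (mul_le_mul_of_nonneg_left (M.abs_target_le hr hω _) hα0)).trans_eq (by ring)
    · exact hQp

theorem abs_bellman_iterate_le (hQ : IsAsyncQLearning M μ ℱ α s a r Q)
    (hα : ∀ t, α t ∈ Set.Icc 0 1) (t : ℕ) :
    ∀ᵐ ω ∂μ, |M.bellman (Q t ω) (s t ω, a t ω)| ≤ M.valueBound := by
  filter_upwards [hQ.norm_iterate_le hα t] with ω hω
  refine (norm_le_pi_norm (M.bellman (Q t ω)) _).trans ((M.norm_bellman_le _).trans ?_)
  grw [hω, M.rbar_add_γ_mul_valueBound]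

theorem abs_tdNoise_le (hQ : IsAsyncQLearning M μ ℱ α s a r Q) (hα : ∀ t, α t ∈ Set.Icc 0 1)
    (t : ℕ) : ∀ᵐ ω ∂μ, |tdNoise M s a r Q t ω| ≤ 2 * M.valueBound := by
  filter_upwards [hQ.norm_iterate_le hα t, hQ.abs_reward_le t, hQ.abs_bellman_iterate_le hα t]
    with ω hω hr hbellman
  refine (abs_sub _ _).trans ?_
  grw [M.abs_target_le hr hω, hbellman, two_mul]

theorem condExp_greedyValue_next [IsFiniteMeasure μ] (hQ : IsAsyncQLearning M μ ℱ α s a r Q)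
    (hα : ∀ t, α t ∈ Set.Icc 0 1) (t : ℕ) :
    μ[fun ω ↦ greedyValue (Q t ω) (s (t + 1) ω) | ℱ t] =ᵐ[μ]
      fun ω ↦ ∑ s', M.P (s t ω) (a t ω) s' * greedyValue (Q t ω) s' := by
  have hmeas (s' : S) : Measurable[ℱ t] fun ω ↦ greedyValue (Q t ω) s' :=
    (measurable_greedyValue s').comp (hQ.measurable_iterate t)
  have hint (s' : S) : Integrable (fun ω ↦ greedyValue (Q t ω) s') μ := by
    refine .of_bound ((hmeas s').mono (ℱ.le t) le_rfl).aestronglyMeasurable M.valueBound ?_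
    filter_upwards [hQ.norm_iterate_le hα t] with ω hω
    exact (abs_greedyValue_le _ s').trans hω
  filter_upwards [condExp_apply_of_fintype
    (fun s' ↦ ℱ.le _ _ (hQ.measurableSet_state_eq (t + 1) s'))
    (fun s' ↦ (hmeas s').stronglyMeasurable) hint,
    ae_all_iff.mpr (hQ.condExp_next_state t)] with ω hsum hP
  simp only [hsum, hP, mul_comm]

theorem condExp_tdNoise [IsFiniteMeasure μ] (hQ : IsAsyncQLearning M μ ℱ α s a r Q)
    (hα : ∀ t, α t ∈ Set.Icc 0 1) (t : ℕ) : μ[tdNoise M s a r Q t | ℱ t] =ᵐ[μ] 0 := by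
  have hr : Integrable (r t) μ :=
    .of_bound ((hQ.measurable_reward t).mono (ℱ.le _) le_rfl).aestronglyMeasurable M.rbar
      (hQ.abs_reward_le t)
  have hv : Integrable (fun ω ↦ greedyValue (Q t ω) (s (t + 1) ω)) μ := by
    refine .of_bound ((hQ.measurable_greedyValue_next (hQ.measurable_iterate t)).mono
      (ℱ.le _) le_rfl).aestronglyMeasurable M.valueBound ?_
    filter_upwards [hQ.norm_iterate_le hα t] with ω hω
    exact (abs_greedyValue_le _ _).trans hω
  have hb : Integrable (fun ω ↦ M.bellman (Q t ω) (s t ω, a t ω)) μ :=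
    .of_bound ((hQ.measurable_bellman_iterate t).mono (ℱ.le t) le_rfl).aestronglyMeasurable
      M.valueBound (hQ.abs_bellman_iterate_le hα t)
  have hb_condExp := condExp_of_stronglyMeasurable (ℱ.le t)
    (hQ.measurable_bellman_iterate t).stronglyMeasurable hb
  filter_upwards [condExp_sub (hr.add (hv.const_mul M.γ)) hb (ℱ t),
    condExp_add hr (hv.const_mul M.γ) (ℱ t),
    condExp_smul (M.γ : ℝ) (fun ω ↦ greedyValue (Q t ω) (s (t + 1) ω)) (ℱ t),
    hQ.condExp_reward t, hQ.condExp_greedyValue_next hα t] with ω hsub hadd hsmul hR hnext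
  calc μ[tdNoise M s a r Q t | ℱ t] ω
      = M.R (s t ω) (a t ω) + M.γ * ∑ s', M.P (s t ω) (a t ω) s' * greedyValue (Q t ω) s' -
          M.bellman (Q t ω) (s t ω, a t ω) := by
        refine hsub.trans ?_
        rw [Pi.sub_apply, hadd, Pi.add_apply, hR, hb_condExp, ← hnext]
        exact congrArg (_ + · - _) hsmul
    _ = 0 := sub_self _

theorem isAsyncSA [IsFiniteMeasure μ] (hQ : IsAsyncQLearning M μ ℱ α s a r Q)
    (hα : ∀ t, α t ∈ Set.Icc 0 1) :
    IsAsyncSA μ ℱ M.bellman α (fun t ω ↦ (s t ω, a t ω)) (tdNoise M s a r Q) Q where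
  measurable_iterate := hQ.measurable_iterate
  measurableSet_coord_eq := hQ.measurableSet_state_action_eq
  measurable_noise := hQ.measurable_tdNoise
  condExp_noise := hQ.condExp_tdNoise hα
  update t ω p := by
    rw [hQ.update, tdNoise]
    split_ifs with hp
    · rw [← hp]
      ring
    · rfl

end IsAsyncQLearning

theorem log_two_mul_div_le {K τ δ : ℝ} (hK : 0 < K) (hτ : 0 ≤ τ) (hδ : 0 < δ) (T : ℕ) :
    Real.log (2 * T * K / δ) ≤ Real.log (2 * (τ + 1) * T ^ 2 * K / δ) := by
  obtain rfl | hT := T.eq_zero_or_pos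
  · simp
  have hT1 : (1 : ℝ) ≤ T := by exact_mod_cast hT
  have hT_le : (T : ℝ) ≤ (τ + 1) * T ^ 2 := by
    calc (T : ℝ) = 1 * T ^ 1 := by ring
      _ ≤ (τ + 1) * T ^ 2 := by
        gcongr
        · linarith
        · norm_num
  rw [mul_assoc 2 (τ + 1)]
  gcongr

theorem two_mul_mul_max_le {v τ h t0 μmin g : ℝ} (hv : 0 ≤ v) (hτ : 0 ≤ τ) (hh : 0 ≤ h)
    (ht0 : 0 ≤ t0) (hμ : 0 < μmin) (hg : 0 < g) (hg1 : g ≤ 1) :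
    2 * v * max (24 * h * τ / (μmin / 2 * g)) (τ + t0) ≤
      4 * v / g * max (160 * h * τ / μmin) (2 * (τ + t0)) := by
  have hfirst : 24 * h * τ / (μmin / 2 * g) ≤ 2 / g * (160 * h * τ / μmin) := by
    calc 24 * h * τ / (μmin / 2 * g) = 2 / g * (24 * h * τ / μmin) := by field_simp
      _ ≤ 2 / g * (160 * h * τ / μmin) := by
        gcongr
        norm_num
  have hsecond : τ + t0 ≤ 2 / g * (2 * (τ + t0)) := by
    calc τ + t0 = 1 * (1 * (τ + t0)) := by ring
      _ ≤ 2 / g * (2 * (τ + t0)) := by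
        gcongr
        · rw [le_div_iff₀ hg]
          linarith
        · norm_num
  calc 2 * v * max (24 * h * τ / (μmin / 2 * g)) (τ + t0)
      ≤ 2 * v * (2 / g * max (160 * h * τ / μmin) (2 * (τ + t0))) := by
        grw [hfirst, hsecond, ← mul_max_of_nonneg _ _ (by positivity)]
    _ = 4 * v / g * max (160 * h * τ / μmin) (2 * (τ + t0)) := by ring

theorem errorBound_le_of_two_mul {v τ h t0 μmin g K δ : ℝ} (hv : 0 ≤ v) (hτ : 0 ≤ τ) (hh : 0 ≤ h)
    (ht0 : 0 ≤ t0) (hμ : 0 < μmin) (hg : 0 < g) (hg1 : g ≤ 1) (hK : 0 < K) (hδ : 0 < δ) (T : ℕ) :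
    errorBound (15 * (2 * v) / g * √(2 * (τ + 1) * h * Real.log (2 * T * K / δ) / (μmin / 2)))
      (2 * v * max (24 * h * τ / (μmin / 2 * g)) (τ + t0)) (T + t0) ≤
    60 * v / g * √(2 * (τ + 1) * h / μmin) *
        √(Real.log (2 * (τ + 1) * T ^ 2 * K / δ) / (T + t0)) +
      4 * v / g * max (160 * h * τ / μmin) (2 * (τ + t0)) * (1 / (T + t0)) := by
  set X : ℝ := 2 * (τ + 1) * h / μmin
  set L : ℝ := Real.log (2 * T * K / δ)
  have hsqrt : √(2 * (τ + 1) * h * L / (μmin / 2)) ≤ 2 * √X * √L := by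
    calc √(2 * (τ + 1) * h * L / (μmin / 2)) = √2 * √X * √L := by
          rw [← Real.sqrt_mul zero_le_two, ← Real.sqrt_mul (by positivity)]
          congr 1
          simp only [X]
          field_simp
      _ ≤ 2 * √X * √L := by
          gcongr
          exact Real.sqrt_le_iff.mpr (by norm_num)
  have hmax := two_mul_mul_max_le hv hτ hh ht0 hμ hg hg1
  unfold errorBound
  rw [Real.sqrt_div' (Real.log _) (by positivity)]
  calc _ ≤ 15 * (2 * v) / g * (2 * √X * √L) / √(T + t0) +
        4 * v / g * max (160 * h * τ / μmin) (2 * (τ + t0)) / (T + t0) := by gcongr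
    _ = 60 * v / g * √X * (√L / √(T + t0)) +
        4 * v / g * max (160 * h * τ / μmin) (2 * (τ + t0)) * (1 / (T + t0)) := by ring
    _ ≤ _ := by
      grw [show L ≤ _ from log_two_mul_div_le hK hτ hδ T]

theorem asynchronous_Q_learning_finite_time_bound_general {Ω S A : Type*} {m0 : MeasurableSpace Ω}
    {μ : Measure Ω} [IsProbabilityMeasure μ] {ℱ : Filtration ℕ m0} [Fintype S] [Fintype A]
    [Nonempty A] [DecidableEq S] [DecidableEq A] {M : DiscountedMDP S A} {α : ℕ → ℝ}
    {s : ℕ → Ω → S} {a : ℕ → Ω → A} {r : ℕ → Ω → ℝ} {Q : ℕ → Ω → S × A → ℝ}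
    (hQ : IsAsyncQLearning M μ ℱ α s a r Q) {Qstar : S × A → ℝ}
    (hfix : Function.IsFixedPt M.bellman Qstar) {μmin : ℝ} (hμmin : 0 < μmin) {τ : ℕ}
    (hexpl : ∀ n p, ∀ᵐ ω ∂μ, μmin / 2 ≤ visitProb μ ℱ τ (fun t ω ↦ (s t ω, a t ω)) p n ω)
    {h t0 : ℝ} (ht0 : max (4 * h) τ ≤ t0) (hh : 4 / (μmin * (1 - M.γ)) ≤ h)
    (hα : ∀ t, α t = h / (t + t0)) (T : ℕ) {δ : ℝ} (hδ : 0 < δ) (hδ1 : δ < 1) :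
    ENNReal.ofReal (1 - δ) ≤ μ {ω | ‖Q T ω - Qstar‖ ≤
      60 * M.rbar / (1 - M.γ) ^ 2 * √(2 * (τ + 1) * h / μmin) *
          √(Real.log (2 * (τ + 1) * T ^ 2 * Fintype.card S * Fintype.card A / δ) / (T + t0)) +
        4 * M.rbar / (1 - M.γ) ^ 2 * max (160 * h * τ / μmin) (2 * (τ + t0)) *
          (1 / (T + t0))} := by
  have hγ := M.one_sub_γ_pos
  obtain ⟨hht0, hτt0⟩ := max_le_iff.mp ht0
  have hh0 : 0 < h := lt_of_lt_of_le (by positivity) hh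
  have hα01 (t : ℕ) : α t ∈ Set.Icc 0 1 := by
    have := t.cast_nonneg (α := ℝ)
    rw [hα]
    exact ⟨div_nonneg hh0.le (by linarith), div_le_one_of_le₀ (by linarith) (by linarith)⟩
  have hQ_sub (t : ℕ) : ∀ᵐ ω ∂μ, ‖Q t ω - Qstar‖ ≤ (2 * M.valueBound : ℝ≥0) := by
    filter_upwards [hQ.norm_iterate_le hα01 t] with ω hω
    grw [norm_sub_le, hω, M.norm_le_valueBound_of_isFixedPt hfix, two_mul, NNReal.coe_add]
  have hhσ : 2 ≤ μmin / 2 * h * (1 - M.γ) := by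
    rw [div_le_iff₀ (by positivity)] at hh
    linarith
  refine ((hQ.isAsyncSA hα01).ofReal_one_sub_le_measure_norm_iterate_sub_le
    M.contractingWith_bellman hfix hQ_sub (hQ.abs_tdNoise_le hα01) hα hτt0 hht0 (half_pos hμmin)
    hhσ hexpl T hδ hδ1).trans (measure_mono fun ω hω ↦ ?_)
  obtain ⟨ω₀⟩ := nonempty_of_isProbabilityMeasure μ
  have : Nonempty S := ⟨s 0 ω₀⟩
  have hcard : (0 : ℝ) < Fintype.card (S × A) := by exact_mod_cast Fintype.card_pos
  rw [Set.mem_ofPred_eq] at hω ⊢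
  refine hω.trans ((errorBound_le_of_two_mul M.valueBound.coe_nonneg τ.cast_nonneg hh0.le
    (by linarith) hμmin hγ (by simp) hcard hδ T).trans_eq ?_)
  rw [M.coe_valueBound, Fintype.card_prod, Nat.cast_mul]
  congr 3
  · field_simp
  · ring_nf
  · field_simp

end

open scoped NNReal in
/-- **Theorem 2 (finite-time bound for asynchronous Q-learning).**
For asynchronous Q-learning on a single trajectory of a `γ`-discounted MDP with bounded
rewards, sufficient exploration (with parameters `μ_min`, `t_mix`,
`τ = ⌈log₂(2/μ_min)⌉·t_mix`), and rescaled linear step size `α_t = h/(t+t₀)` with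
`t₀ ≥ max(4h, τ)` and `h ≥ 4/(μ_min(1-γ))`, for every `T ≥ τ` and `δ ∈ (0,1)`, with
probability at least `1-δ`,
`‖Q(T) - Q*‖_∞ ≤ (60r̄/(1-γ)²)·√(2(τ+1)h/μ_min)·√(log(2(τ+1)T²|S||A|/δ)/(T+t₀))
   + (4r̄/(1-γ)²)·max(160hτ/μ_min, 2(τ+t₀))·1/(T+t₀)`. -/
theorem asynchronous_Q_learning_finite_time_bound
    {Ω : Type*} {m0 : MeasurableSpace Ω} (μ : Measure Ω) [IsProbabilityMeasure μ]
    (ℱ : Filtration ℕ m0)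
    (S A : Type*) [Fintype S] [Fintype A] [Nonempty S] [Nonempty A]
    [DecidableEq S] [DecidableEq A]
    [MeasurableSpace S] [MeasurableSingletonClass S]
    [MeasurableSpace A] [MeasurableSingletonClass A]
    (γ : ℝ) (hγ0 : 0 < γ) (hγ1 : γ < 1)
    -- transition probabilities and mean rewards
    (P : S → A → S → ℝ) (hP0 : ∀ s a s', 0 ≤ P s a s') (hP1 : ∀ s a, ∑ s', P s a s' = 1)
    (R : S → A → ℝ) (rbar : ℝ) (hR : ∀ s a, |R s a| ≤ rbar)
    -- the optimal Q-function: unique fixed point of the Bellman optimality operator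
    (Qstar : S × A → ℝ)
    (hfix : ∀ p : S × A,
      Qstar p = R p.1 p.2 + γ * ∑ s', P p.1 p.2 s' * ⨆ a' : A, Qstar (s', a'))
    -- the trajectory, adapted to the filtration
    (s : ℕ → Ω → S) (a : ℕ → Ω → A) (r : ℕ → Ω → ℝ)
    (hsa_meas : ∀ t, Measurable[ℱ t] fun ω => (s t ω, a t ω))
    (hr_meas : ∀ t, Measurable[ℱ (t + 1)] (r t))
    (hs_meas : ∀ t, Measurable[ℱ (t + 1)] (s (t + 1)))
    -- conditionally on `ℱ_t`: the reward has mean `r_{s_t,a_t}`, the next state has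
    -- distribution `P(·|s_t,a_t)`, and they are conditionally independent
    (hr_mean : ∀ t, μ[r t | ℱ t] =ᵐ[μ] fun ω => R (s t ω) (a t ω))
    (hs_dist : ∀ (t : ℕ) (s' : S),
      μ[(fun ω => if s (t + 1) ω = s' then (1 : ℝ) else 0) | ℱ t] =ᵐ[μ]
        fun ω => P (s t ω) (a t ω) s')
    (hindep : ∀ (t : ℕ) (g : S → ℝ),
      μ[(fun ω => r t ω * g (s (t + 1) ω)) | ℱ t] =ᵐ[μ]
        fun ω => (μ[r t | ℱ t]) ω * (μ[(fun ω' => g (s (t + 1) ω')) | ℱ t]) ω)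
    -- bounded rewards
    (hr_bd : ∀ t, ∀ᵐ ω ∂μ, |r t ω| ≤ rbar)
    -- exploration: `τ = ⌈log₂(2/μ_min)⌉ t_mix` and
    -- `P((s_t,a_t) = (s,a) | ℱ_{t-τ}) ≥ μ_min/2` a.s. for `t ≥ τ`
    (μmin : ℝ) (hμmin0 : 0 < μmin) (hμmin1 : μmin < 1)
    (tmix : ℕ) (htmix : 0 < tmix) (τ : ℕ)
    (hτ : τ = ⌈Real.logb 2 (2 / μmin)⌉₊ * tmix)
    (hexpl : ∀ (p : S × A) (t : ℕ), τ ≤ t →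
      ∀ᵐ ω ∂μ, μmin / 2 ≤
        (μ[(fun ω' => if (s t ω', a t ω') = p then (1 : ℝ) else 0) | ℱ (t - τ)]) ω)
    -- step sizes
    (α : ℕ → ℝ) (hα : ∀ t, α t ∈ Set.Ioc (0 : ℝ) 1)
    (h t0 : ℝ) (ht0 : max (4 * h) (τ : ℝ) ≤ t0) (hh : 4 / (μmin * (1 - γ)) ≤ h)
    (hstep : ∀ t, α t = h / ((t : ℝ) + t0))
    -- the asynchronous Q-learning iterates
    (Q : ℕ → Ω → S × A → ℝ) (hQ0 : ∀ ω, Q 0 ω = 0)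
    (hupd : ∀ t ω p, Q (t + 1) ω p =
      if p = (s t ω, a t ω) then
        (1 - α t) * Q t ω p + α t * (r t ω + γ * ⨆ a' : A, Q t ω (s (t + 1) ω, a'))
      else Q t ω p)
    -- horizon and confidence level
    (T : ℕ) (hT : τ ≤ T) (δ : ℝ) (hδ0 : 0 < δ) (hδ1 : δ < 1) :
    ENNReal.ofReal (1 - δ) ≤
      μ {ω | (⨆ p : S × A, |Q T ω p - Qstar p|) ≤
        (60 * rbar / (1 - γ) ^ 2) * Real.sqrt (2 * ((τ : ℝ) + 1) * h / μmin) *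
          Real.sqrt (Real.log (2 * ((τ : ℝ) + 1) * (T : ℝ) ^ 2 *
            (Fintype.card S : ℝ) * (Fintype.card A : ℝ) / δ) / ((T : ℝ) + t0)) +
        (4 * rbar / (1 - γ) ^ 2) *
          max (160 * h * (τ : ℝ) / μmin) (2 * ((τ : ℝ) + t0)) * (1 / ((T : ℝ) + t0))} := by
  have hrbar : 0 ≤ rbar :=
    (abs_nonneg _).trans (hR (Classical.arbitrary S) (Classical.arbitrary A))
  lift γ to ℝ≥0 using hγ0.le
  lift rbar to ℝ≥0 using hrbar
  let M : DiscountedMDP S A := ⟨P, R, γ, rbar, hP0, hP1, hγ1, hR⟩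
  have hQ : IsAsyncQLearning M μ ℱ α s a r Q :=
    { measurableSet_state_action_eq := fun t p ↦ hsa_meas t (measurableSet_singleton p)
      measurable_reward := hr_meas
      condExp_reward := hr_mean
      condExp_next_state := hs_dist
      abs_reward_le := hr_bd
      measurable_init := by
        rw [funext hQ0]
        exact measurable_const
      norm_init_le := .of_forall fun ω ↦ by simp [hQ0]
      update := hupd }
  refine (asynchronous_Q_learning_finite_time_bound_general hQ (funext fun p ↦ (hfix p).symm)
    hμmin0 (fun n p ↦ ?_) ht0 hh hstep T hδ0 hδ1).trans (measure_mono fun ω hω ↦ ?_)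
  · simpa only [Nat.add_sub_cancel_left] using! hexpl p (τ + n) (Nat.le_add_right τ n)
  · exact (ciSup_le fun p ↦ norm_le_pi_norm (Q T ω - Qstar) p).trans hω
end

section
/- Under Assumptions 1 and 2, the SA iterates satisfy ‖x(t)‖_v ≤ (1/(1−γ)) · ((1+γ)‖x*‖_v + w̄/v̲) almost surely for every t ≥ 0. -/
/-!
The bound holds along every path on which the noise is bounded. Write
`K = (1 + γ) ‖x*‖_v + w̄ / v̲` and `R = K / (1 - γ)`, so that `γ R + K = R`. Comparison with `x*`
gives `‖F x‖_v ≤ γ ‖x‖_v + (1 + γ) ‖x*‖_v`, hence `‖x(t)‖_v ≤ R` implies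
`‖F (x(t)) + w(t) 𝟙‖_v ≤ γ R + K = R`. Each coordinate of `x(t + 1)` is a convex combination of
those of `x(t)` and `F (x(t)) + w(t) 𝟙`, so the ball of radius `R` is invariant.
-/

open MeasureTheory Finset

/-- Weighted infinity norm `‖x‖_v = max_i |x_i| / v_i`. -/
noncomputable def vnorm {n : ℕ} (v x : Fin n → ℝ) : ℝ := ⨆ i, |x i| / v i

lemma single_apply_mem_Icc_zero_one {ι : Type*} [DecidableEq ι] {a : ℝ}
    (ha : a ∈ Set.Icc (0 : ℝ) 1) (i j : ι) : (Pi.single i a : ι → ℝ) j ∈ Set.Icc (0 : ℝ) 1 := by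
  rw [Pi.single_apply]
  split_ifs
  exacts [ha, ⟨le_rfl, zero_le_one⟩]

section WeightedNorm

variable {n : ℕ} {v : Fin n → ℝ}

lemma vnorm_eq_norm_mul_inv (hv : ∀ i, 0 < v i) (x : Fin n → ℝ) : vnorm v x = ‖x * v⁻¹‖ := by
  simp [vnorm, Pi.norm_def, Finset.sup_univ_eq_ciSup, NNReal.coe_iSup, abs_of_pos (hv _),
    div_eq_mul_inv]

lemma vnorm_zero : vnorm v 0 = 0 := by
  simp [vnorm]

lemma vnorm_nonneg (hv : ∀ i, 0 < v i) (x : Fin n → ℝ) : 0 ≤ vnorm v x :=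
  vnorm_eq_norm_mul_inv hv x ▸ norm_nonneg _

lemma vnorm_le_iff (hv : ∀ i, 0 < v i) {x : Fin n → ℝ} {r : ℝ} (hr : 0 ≤ r) :
    vnorm v x ≤ r ↔ ∀ i, |x i| ≤ r * v i := by
  simp only [vnorm_eq_norm_mul_inv hv, pi_norm_le_iff_of_nonneg hr, Pi.mul_apply, Pi.inv_apply,
    Real.norm_eq_abs, abs_mul, abs_inv, abs_of_pos (hv _), mul_inv_le_iff₀ (hv _)]

lemma vnorm_add_le (hv : ∀ i, 0 < v i) (x y : Fin n → ℝ) :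
    vnorm v (x + y) ≤ vnorm v x + vnorm v y := by
  simpa only [vnorm_eq_norm_mul_inv hv, add_mul] using norm_add_le (x * v⁻¹) (y * v⁻¹)

lemma vnorm_sub_le (hv : ∀ i, 0 < v i) (x y : Fin n → ℝ) :
    vnorm v (x - y) ≤ vnorm v x + vnorm v y := by
  simpa only [vnorm_eq_norm_mul_inv hv, sub_mul] using norm_sub_le (x * v⁻¹) (y * v⁻¹)

lemma vnorm_le_norm_div_iInf (hv : ∀ i, 0 < v i) (x : Fin n → ℝ) :
    vnorm v x ≤ ‖x‖ / ⨅ i, v i := by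
  have hbound : 0 ≤ ‖x‖ / ⨅ i, v i :=
    div_nonneg (norm_nonneg x) (Real.iInf_nonneg fun i => (hv i).le)
  refine Real.iSup_le (fun i => ?_) hbound
  have : Nonempty (Fin n) := ⟨i⟩
  have hmin : 0 < ⨅ i, v i := by
    obtain ⟨j, hj⟩ := exists_eq_ciInf_of_finite (f := v)
    exact hj ▸ hv j
  exact div_le_div₀ (norm_nonneg x) (norm_le_pi_norm x i) hmin
    (ciInf_le (Set.finite_range v).bddBelow i)

lemma vnorm_const_le_div_iInf (hv : ∀ i, 0 < v i) {c b : ℝ} (hc : |c| ≤ b) :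
    vnorm v (fun _ => c) ≤ b / ⨅ i, v i :=
  (vnorm_le_norm_div_iInf hv _).trans <|
    div_le_div_of_nonneg_right ((pi_norm_const_le c).trans hc)
      (Real.iInf_nonneg fun i => (hv i).le)

lemma vnorm_le_of_vnorm_sub_le (hv : ∀ i, 0 < v i) {γ : ℝ} (hγ : 0 ≤ γ) {x y c : Fin n → ℝ}
    (h : vnorm v (y - c) ≤ γ * vnorm v (x - c)) :
    vnorm v y ≤ γ * vnorm v x + (1 + γ) * vnorm v c :=
  calc vnorm v y = vnorm v (y - c + c) := by rw [sub_add_cancel]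
    _ ≤ vnorm v (y - c) + vnorm v c := vnorm_add_le hv _ _
    _ ≤ γ * (vnorm v x + vnorm v c) + vnorm v c := by
      gcongr
      exact h.trans (mul_le_mul_of_nonneg_left (vnorm_sub_le hv x c) hγ)
    _ = γ * vnorm v x + (1 + γ) * vnorm v c := by ring

lemma vnorm_add_le_of_vnorm_sub_le (hv : ∀ i, 0 < v i) {γ r W : ℝ} (hγ : 0 ≤ γ)
    {x y c e : Fin n → ℝ} (hx : vnorm v x ≤ r) (h : vnorm v (y - c) ≤ γ * vnorm v (x - c))
    (he : vnorm v e ≤ W) (hr : γ * r + ((1 + γ) * vnorm v c + W) ≤ r) : vnorm v (y + e) ≤ r :=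
  calc vnorm v (y + e) ≤ vnorm v y + vnorm v e := vnorm_add_le hv y e
    _ ≤ (γ * vnorm v x + (1 + γ) * vnorm v c) + W :=
      add_le_add (vnorm_le_of_vnorm_sub_le hv hγ h) he
    _ ≤ γ * r + ((1 + γ) * vnorm v c + W) := by rw [← add_assoc]; gcongr
    _ ≤ r := hr

lemma vnorm_add_mul_sub_le (hv : ∀ i, 0 < v i) {x y a : Fin n → ℝ} {r : ℝ}
    (hx : vnorm v x ≤ r) (hy : vnorm v y ≤ r) (ha : ∀ i, a i ∈ Set.Icc (0 : ℝ) 1) :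
    vnorm v (x + a * (y - x)) ≤ r := by
  have hr : 0 ≤ r := (vnorm_nonneg hv x).trans hx
  rw [vnorm_le_iff hv hr] at hx hy ⊢
  exact fun i => abs_le.2 <|
    (convex_Icc (-(r * v i)) (r * v i)).add_smul_sub_mem (abs_le.1 (hx i)) (abs_le.1 (hy i)) (ha i)

lemma vnorm_relaxed_iterate_le (hv : ∀ i, 0 < v i) {r : ℝ} {G : ℕ → (Fin n → ℝ) → (Fin n → ℝ)}
    (hG : ∀ t y, vnorm v y ≤ r → vnorm v (G t y) ≤ r)
    {a x : ℕ → Fin n → ℝ} (ha : ∀ t i, a t i ∈ Set.Icc (0 : ℝ) 1) (hx0 : vnorm v (x 0) ≤ r)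
    (hupd : ∀ t, x (t + 1) = x t + a t * (G t (x t) - x t)) (t : ℕ) : vnorm v (x t) ≤ r := by
  induction t with
  | zero => exact hx0
  | succ t ih => exact hupd t ▸ vnorm_add_mul_sub_le hv ih (hG t _ ih) (ha t)

end WeightedNorm

theorem SA_iterates_bounded_general {n : ℕ} {v : Fin n → ℝ} (hv : ∀ i, 0 < v i)
    {F : (Fin n → ℝ) → (Fin n → ℝ)} {γ : ℝ} (hγ0 : 0 ≤ γ) (hγ1 : γ < 1) {xstar : Fin n → ℝ}
    (hF : ∀ y, vnorm v (F y - xstar) ≤ γ * vnorm v (y - xstar))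
    {idx : ℕ → Fin n} {w : ℕ → ℝ} {wbar : ℝ} (hw : ∀ t, |w t| ≤ wbar)
    {α : ℕ → ℝ} (hα : ∀ t, α t ∈ Set.Icc (0 : ℝ) 1)
    {x : ℕ → Fin n → ℝ} (hx0 : x 0 = 0)
    (hupd : ∀ t i, x (t + 1) i =
      if i = idx t then x t i + α t * (F (x t) i - x t i + w t) else x t i) (t : ℕ) :
    vnorm v (x t) ≤ (1 / (1 - γ)) * ((1 + γ) * vnorm v xstar + wbar / ⨅ i, v i) := by
  set K := (1 + γ) * vnorm v xstar + wbar / ⨅ i, v i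
  set R := (1 / (1 - γ)) * K with hR
  have hγ : 0 < 1 - γ := sub_pos.2 hγ1
  have hmin : 0 ≤ ⨅ i, v i := Real.iInf_nonneg fun i => (hv i).le
  have hR0 : 0 ≤ R := by
    have hwbar : 0 ≤ wbar := (abs_nonneg _).trans (hw 0)
    have hxstar : 0 ≤ vnorm v xstar := vnorm_nonneg hv xstar
    positivity
  have hRfix : γ * R + K = R := by
    rw [hR]
    field_simp
    ring
  have hrelax (s : ℕ) :
      x (s + 1) = x s + Pi.single (idx s) (α s) * ((F (x s) + fun _ => w s) - x s) := by
    ext i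
    by_cases hi : i = idx s
    · simp [hupd, hi, add_sub_right_comm]
    · simp [hupd, hi]
  exact vnorm_relaxed_iterate_le hv (G := fun s y => F y + fun _ => w s)
    (fun s y hy => vnorm_add_le_of_vnorm_sub_le hv hγ0 hy (hF y)
      (vnorm_const_le_div_iInf hv (hw s)) hRfix.le)
    (fun s i => single_apply_mem_Icc_zero_one (hα s) (idx s) i) (by rwa [hx0, vnorm_zero]) hrelax t

/-- **Proposition 3.** Under the contraction assumption on `F` and the bounded
martingale-difference noise assumption on `w`, the asynchronous SA iterates satisfy
`‖x(t)‖_v ≤ (1/(1-γ))·((1+γ)‖x*‖_v + w̄/v̲)` almost surely, for every `t ≥ 0`. -/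
theorem SA_iterates_bounded
    {Ω : Type*} {m0 : MeasurableSpace Ω} (μ : Measure Ω) [IsProbabilityMeasure μ]
    (ℱ : Filtration ℕ m0)
    (n : ℕ) (hn : 0 < n) (v : Fin n → ℝ) (hv : ∀ i, 0 < v i)
    -- Assumption 1 (contraction)
    (F : (Fin n → ℝ) → (Fin n → ℝ)) (γ C : ℝ) (hγ0 : 0 < γ) (hγ1 : γ < 1) (hC : 0 < C)
    (hcontr : ∀ x y, vnorm v (F x - F y) ≤ γ * vnorm v (x - y))
    (hFbd : ∀ x, vnorm v (F x) ≤ γ * vnorm v x + C)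
    (xstar : Fin n → ℝ) (hfix : F xstar = xstar)
    -- the asynchronous SA scheme
    (idx : ℕ → Ω → Fin n) (hidx : ∀ t, Measurable[ℱ t] (idx t))
    (w : ℕ → Ω → ℝ) (wbar : ℝ)
    (α : ℕ → ℝ) (hα : ∀ t, α t ∈ Set.Ioc (0 : ℝ) 1)
    (X : ℕ → Ω → Fin n → ℝ) (hX0 : ∀ ω, X 0 ω = 0)
    (hupd : ∀ t ω i, X (t + 1) ω i =
      if i = idx t ω then X t ω i + α t * (F (X t ω) i - X t ω i + w t ω) else X t ω i)
    -- Assumption 2 (martingale difference noise)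
    (hw_meas : ∀ t, Measurable[ℱ (t + 1)] (w t))
    (hw_mean : ∀ t, μ[w t | ℱ t] =ᵐ[μ] 0)
    (hw_bd : ∀ t, ∀ᵐ ω ∂μ, |w t ω| ≤ wbar) :
    ∀ t, ∀ᵐ ω ∂μ, vnorm v (X t ω) ≤
      (1 / (1 - γ)) * ((1 + γ) * vnorm v xstar + wbar / ⨅ i, v i) :=
  fun t => (ae_all_iff.2 hw_bd).mono fun ω hω =>
    SA_iterates_bounded_general hv hγ0.le hγ1 (fun y => by simpa only [hfix] using hcontr y xstar)
      hω (fun s => Set.Ioc_subset_Icc_self (hα s)) (x := (X · ω)) (hX0 ω) (hupd · ω) t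
end
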